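/- arXiv:1811.00356 — 6 statements merged into one kernel-verified Lean document; each statement's English description precedes it below -/
import Mathlib

section
/- Let p be a prime, G a finite p-group and N a normal subgroup of G. Then F(G) ≤ F(N) + F(G/N), where F denotes the Frattini length. -/
/-- The iterated Frattini series: `Φ⁰(G) = G` and `Φⁿ⁺¹(G) = Φ(Φⁿ(G))`,
viewed as subgroups of `G`. -/
def frattiniSeries (G : Type*) [Group G] : ℕ → Subgroup G
  | 0 => ⊤
  | n + 1 => (frattini (frattiniSeries G n)).map (frattiniSeries G n).subtype

/-- The Frattini length: the least `n` with `Φⁿ(G) = {1}`. -/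
noncomputable def frattiniLength (G : Type*) [Group G] : ℕ :=
  sInf {n | frattiniSeries G n = ⊥}

/-!
Let `m = F(G/N)` and `n = F(N)`. The projection `G → G/N` sends `Φᵐ(G)` into `Φᵐ(G/N) = 1`, so
`Φᵐ(G) ≤ N`, and then `Φⁿ⁺ᵐ(G) = Φⁿ(Φᵐ(G)) ≤ Φⁿ(N) = 1`. In general `H ≤ K` does not imply
`Φ(H) ≤ Φ(K)`, but it does when `H` is normal in `K` and every proper subgroup of `H` lies in a
maximal one: if a maximal `M < K` does not contain `Φ(H)`, then `K = Φ(H) M`, hence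
`H = Φ(H) (H ∩ M)`, which forces `H = H ∩ M ≤ M`. The terms of the Frattini series are
normal in `G`, so the inclusions above follow by induction.
-/

section FrattiniOf

variable {G G' : Type*} [Group G] [Group G']

/-- The Frattini subgroup of a subgroup `H` of `G`, as a subgroup of `G`. As an operator on
`Subgroup G` it can be iterated, and its values on different subgroups can be compared. -/
def frattiniOf (H : Subgroup G) : Subgroup G :=
  (frattini H).map H.subtype

theorem frattiniSeries_eq_iterate (n : ℕ) : frattiniSeries G n = frattiniOf^[n] ⊤ := by
  induction n with
  | zero => rfl
  | succ n ih => rw [Function.iterate_succ_apply', ← ih]; rfl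

theorem frattiniOf_le (H : Subgroup G) : frattiniOf H ≤ H :=
  H.map_subtype_le _

instance frattiniOf_normal (H : Subgroup G) [H.Normal] : (frattiniOf H).Normal :=
  ConjAct.normal_of_characteristic_of_normal

theorem iterate_frattiniOf_normal (H : Subgroup G) [hH : H.Normal] (n : ℕ) :
    (frattiniOf^[n] H).Normal := by
  induction n with
  | zero => exact hH
  | succ n ih => rw [Function.iterate_succ_apply']; infer_instance

theorem map_frattiniOf_le (f : G →* G') (H : Subgroup G) :
    (frattiniOf H).map f ≤ frattiniOf (H.map f) :=
  calc (frattiniOf H).map f = ((frattini H).map (f.subgroupMap H)).map (H.map f).subtype := by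
        simp only [frattiniOf, Subgroup.map_map]; rfl
    _ ≤ frattiniOf (H.map f) := Subgroup.map_mono <| Subgroup.map_le_iff_le_comap.2 <|
        frattini_le_comap_frattini_of_surjective (f.subgroupMap_surjective H)

theorem map_frattiniOf_of_injective {f : G →* G'} (hf : Function.Injective f) (H : Subgroup G) :
    (frattiniOf H).map f = frattiniOf (H.map f) :=
  let e := H.equivMapOfInjective f hf
  calc (frattiniOf H).map f = ((frattini H).map e.toMonoidHom).map (H.map f).subtype := by
        simp only [frattiniOf, Subgroup.map_map]; rfl
    _ = frattiniOf (H.map f) := congrArg _ (OrderIso.map_radical e.mapSubgroup)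

theorem map_iterate_frattiniOf_of_injective {f : G →* G'} (hf : Function.Injective f)
    (H : Subgroup G) (n : ℕ) : (frattiniOf^[n] H).map f = frattiniOf^[n] (H.map f) :=
  Function.Semiconj.iterate_right (f := Subgroup.map f) (map_frattiniOf_of_injective hf) n H

theorem map_subtype_frattiniSeries (H : Subgroup G) (n : ℕ) :
    (frattiniSeries H n).map H.subtype = frattiniOf^[n] H := by
  rw [frattiniSeries_eq_iterate, map_iterate_frattiniOf_of_injective H.subtype_injective,
    ← MonoidHom.range_eq_map, H.range_subtype]

theorem frattiniOf_le_frattini (N : Subgroup G) [N.Normal] [IsCoatomic (Subgroup N)] :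
    frattiniOf N ≤ frattini G := by
  refine le_iInf₂ fun M (hM : IsCoatom M) => ?_
  by_contra hNM
  have hsup : frattiniOf N ⊔ M = ⊤ := hM.2 _ (right_lt_sup.2 hNM)
  have hgen : M.subgroupOf N ⊔ frattini N = ⊤ := by
    refine eq_top_iff.2 fun x _ => ?_
    obtain ⟨_, ⟨y, hy, rfl⟩, m, hm, hx⟩ :=
      Subgroup.mem_sup_of_normal_left.1 (hsup ▸ Subgroup.mem_top (x : G))
    have hyx : y⁻¹ * x ∈ M.subgroupOf N := by
      simpa [Subgroup.mem_subgroupOf, ← hx] using hm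
    rw [← mul_inv_cancel_left y x]
    exact mul_mem (le_sup_right (α := Subgroup N) hy) (le_sup_left (α := Subgroup N) hyx)
  exact hNM ((frattiniOf_le N).trans (Subgroup.subgroupOf_eq_top.1 (frattini_nongenerating hgen)))

instance wellFoundedGT_subgroup [WellFoundedGT (Subgroup G)] (H : Subgroup G) :
    WellFoundedGT (Subgroup H) :=
  StrictMono.wellFoundedGT (f := Subgroup.map H.subtype) fun _ _ =>
    (Subgroup.map_lt_map_iff_of_injective H.subtype_injective).2

theorem wellFoundedGT_subgroup_of_surjective [WellFoundedGT (Subgroup G)] {f : G →* G'}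
    (hf : Function.Surjective f) : WellFoundedGT (Subgroup G') :=
  StrictMono.wellFoundedGT (f := Subgroup.comap f) fun _ _ =>
    (Subgroup.comap_lt_comap_of_surjective hf).2

theorem frattiniOf_mono_of_normal [WellFoundedGT (Subgroup G)] {H K : Subgroup G} (hHK : H ≤ K)
    [(H.subgroupOf K).Normal] : frattiniOf H ≤ frattiniOf K :=
  calc frattiniOf H = (frattiniOf (H.subgroupOf K)).map K.subtype := by
        rw [map_frattiniOf_of_injective K.subtype_injective, Subgroup.map_subgroupOf_eq_of_le hHK]
    _ ≤ frattiniOf K := Subgroup.map_mono (frattiniOf_le_frattini _)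

theorem iterate_frattiniOf_mono_of_normal [WellFoundedGT (Subgroup G)] {H K : Subgroup G}
    [H.Normal] (hHK : H ≤ K) (n : ℕ) : frattiniOf^[n] H ≤ frattiniOf^[n] K := by
  induction n with
  | zero => exact hHK
  | succ n ih =>
    have := iterate_frattiniOf_normal H n
    simpa only [Function.iterate_succ_apply'] using frattiniOf_mono_of_normal ih

theorem map_frattiniSeries_le_of_surjective [WellFoundedGT (Subgroup G)] {f : G →* G'}
    (hf : Function.Surjective f) (n : ℕ) :
    (frattiniSeries G n).map f ≤ frattiniSeries G' n := by
  have := wellFoundedGT_subgroup_of_surjective hf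
  simp only [frattiniSeries_eq_iterate]
  induction n with
  | zero => exact le_top
  | succ n ih =>
    have := (iterate_frattiniOf_normal (⊤ : Subgroup G) n).map f hf
    simp only [Function.iterate_succ_apply']
    exact (map_frattiniOf_le f _).trans (frattiniOf_mono_of_normal ih)

theorem frattiniOf_lt [WellFoundedGT (Subgroup G)] {H : Subgroup G} (hH : H ≠ ⊥) :
    frattiniOf H < H := by
  refine (frattiniOf_le H).lt_of_ne fun h => hH ?_
  have htop : frattini H = ⊤ :=
    Subgroup.map_injective H.subtype_injective <| by
      rw [← MonoidHom.range_eq_map, H.range_subtype]; exact h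
  have hbot : (⊥ : Subgroup H) = ⊤ := frattini_nongenerating ((bot_sup_eq _).trans htop)
  have : Subsingleton H := Subgroup.subsingleton_iff.1 (subsingleton_of_bot_eq_top hbot)
  exact H.eq_bot_of_subsingleton

variable (G) in
theorem exists_frattiniSeries_eq_bot [WellFoundedGT (Subgroup G)] [WellFoundedLT (Subgroup G)] :
    ∃ n, frattiniSeries G n = ⊥ := by
  by_contra! h
  exact not_strictAnti_of_wellFoundedLT (frattiniSeries G)
    (strictAnti_nat_of_succ_lt fun n => frattiniOf_lt (h n))

end FrattiniOf

theorem frattiniLength_le_of_normal_general {G : Type*} [Group G] [WellFoundedGT (Subgroup G)]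
    (N : Subgroup G) [N.Normal] (hN : ∃ n, frattiniSeries N n = ⊥)
    (hQ : ∃ n, frattiniSeries (G ⧸ N) n = ⊥) :
    frattiniLength G ≤ frattiniLength N + frattiniLength (G ⧸ N) := by
  set n := frattiniLength N
  set m := frattiniLength (G ⧸ N)
  have hn : frattiniSeries N n = ⊥ := Nat.sInf_mem hN
  have hm : frattiniSeries (G ⧸ N) m = ⊥ := Nat.sInf_mem hQ
  have hmN : frattiniOf^[m] ⊤ ≤ N := by
    have := map_frattiniSeries_le_of_surjective (QuotientGroup.mk'_surjective N) m
    rwa [hm, le_bot_iff, Subgroup.map_eq_bot_iff, QuotientGroup.ker_mk',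
      frattiniSeries_eq_iterate] at this
  have := iterate_frattiniOf_normal (⊤ : Subgroup G) m
  refine Nat.sInf_le (le_bot_iff.1 ?_)
  calc frattiniSeries G (n + m) = frattiniOf^[n] (frattiniOf^[m] ⊤) := by
        rw [frattiniSeries_eq_iterate, Function.iterate_add_apply]
    _ ≤ frattiniOf^[n] N := iterate_frattiniOf_mono_of_normal hmN n
    _ = ⊥ := by rw [← map_subtype_frattiniSeries, hn, Subgroup.map_bot]

/-- For a finite `p`-group `G` and a normal subgroup `N` of `G`,
`𝓕(G) ≤ 𝓕(N) + 𝓕(G/N)`. -/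
theorem frattiniLength_le_of_normal (p : ℕ) (hp : p.Prime)
    (G : Type*) [Group G] [Finite G] (hG : IsPGroup p G)
    (N : Subgroup G) [N.Normal] :
    frattiniLength G ≤ frattiniLength N + frattiniLength (G ⧸ N) :=
  frattiniLength_le_of_normal_general N (exists_frattiniSeries_eq_bot N)
    (exists_frattiniSeries_eq_bot (G ⧸ N))
end

section
/- Let p be a prime and k a finite field with q elements whose characteristic is different from p. Let G be a finite p-group which admits a faithful irreducible representation on an N-dimensional k-vector space (N ≥ 1). Then F(G) ≤ ν_p(N) + p·log_p(q), where F denotes the Frattini length, ν_p the p-adic valuation, and log_p(q) the real logarithm of q to base p (so the inequality is an inequality of real numbers). -/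
/-- A representation is irreducible if the space is nonzero and the only invariant
subspaces are `⊥` and `⊤`. -/
def Representation.IsIrreducibleRep {k G V : Type*} [CommSemiring k] [Monoid G]
    [AddCommMonoid V] [Module k V] (ρ : Representation k G V) : Prop :=
  Nontrivial V ∧ ∀ W : Submodule k V, (∀ g : G, W.map (ρ g) ≤ W) → W = ⊥ ∨ W = ⊤

/-!
The Frattini subgroup of a `p`-group `H` is `Ψ(H) = Hᵖ[H, H]`, which is visibly monotone in `H` and
compatible with homomorphisms. So it suffices to show that `Ψⁿ(G)` acts trivially on `V` for
`n = ν_p(N) + ⌊log_p(q ^ p)⌋`, and this is done by induction on `N`.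

Dividing by the kernel, `G` may be assumed to act faithfully. Choose a normal subgroup `A` which is
its own centralizer and let `E` be the algebra of operators generated by `A`, on which `G` acts by
conjugation. Let `𝔪` be a maximal ideal of `E` annihilating a nonzero vector of `V`.

* If `G` moves `𝔪`, then the stabilizer of `𝔪` lies in a normal subgroup `H` of index `p`, and
  grouping the conjugates of `𝔪` along the cosets of `H` shows that `V` is the direct sum of `p`
  translates of an irreducible `H`-subspace of dimension `N / p`. As `Ψ(G) ≤ H`, induction applies.
* If `G` fixes `𝔪`, then `𝔪 = 0` and `E` is a finite field. Hence `A` is cyclic, generated by some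
  `a` of order `pᵐ` dividing `q ^ N - 1`, which forces `m ≤ n`. The quotient `G / A` embeds into the
  cyclic group `Gal(E/k)`, so `G` is generated by `a` and one more element `b`. Conjugation by a
  `p`-element acts on `⟨a⟩` as raising to a power congruent to `1` modulo `p`, which yields
  `Ψⁱ(G) ≤ ⟨a ^ pⁱ, b ^ pⁱ⟩` and `b ^ pᵐ = 1`, so that `Ψᵐ(G) = 1`.
-/

open scoped Pointwise commutatorElement IsMulCommutative

section PowCommutator

variable {G G' : Type*} [Group G] [Group G'] {p : ℕ} {H K : Subgroup G}

/-- The subgroup `Hᵖ[H, H]`, which is the Frattini subgroup of `H` if `H` is a finite `p`-group. It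
replaces the Frattini subgroup because it is monotone and compatible with homomorphic images. -/
def powCommutator (p : ℕ) (H : Subgroup G) : Subgroup G :=
  ⁅H, H⁆ ⊔ Subgroup.closure ((· ^ p) '' (H : Set G))

theorem powCommutator_le_iff :
    powCommutator p H ≤ K ↔ (∀ x ∈ H, ∀ y ∈ H, ⁅x, y⁆ ∈ K) ∧ ∀ x ∈ H, x ^ p ∈ K := by
  rw [powCommutator, sup_le_iff, Subgroup.commutator_le, Subgroup.closure_le, Set.image_subset_iff]
  rfl

theorem pow_mem_powCommutator {x : G} (hx : x ∈ H) : x ^ p ∈ powCommutator p H :=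
  (powCommutator_le_iff.1 le_rfl).2 x hx

theorem powCommutator_mono : Monotone (powCommutator p (G := G)) := fun _ _ h =>
  sup_le_sup (Subgroup.commutator_mono h h) (Subgroup.closure_mono (Set.image_mono h))

theorem powCommutator_le_self (H : Subgroup G) : powCommutator p H ≤ H :=
  powCommutator_le_iff.2 ⟨fun _ hx _ hy =>
    H.commutator_le_self (Subgroup.commutator_mem_commutator hx hy), fun _ hx => H.pow_mem hx p⟩

theorem powCommutator_iterate_antitone : Antitone fun n => (powCommutator p (G := G))^[n] :=
  Function.antitone_iterate_of_le_id powCommutator_le_self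

theorem map_powCommutator (f : G →* G') (H : Subgroup G) :
    (powCommutator p H).map f = powCommutator p (H.map f) := by
  simp only [powCommutator, Subgroup.map_sup, Subgroup.map_commutator, MonoidHom.map_closure,
    Subgroup.coe_map, Set.image_image, map_pow]

theorem map_powCommutator_iterate (f : G →* G') (n : ℕ) (H : Subgroup G) :
    ((powCommutator p)^[n] H).map f = (powCommutator p)^[n] (H.map f) :=
  Function.Semiconj.iterate_right (f := Subgroup.map f) (map_powCommutator f) n H

theorem powCommutator_iterate_top_le_of_quotient [K.Normal] {n : ℕ}
    (h : (powCommutator p)^[n] (⊤ : Subgroup (G ⧸ K)) = ⊥) : (powCommutator p)^[n] ⊤ ≤ K := by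
  have hmap := map_powCommutator_iterate (p := p) (QuotientGroup.mk' K) n ⊤
  rw [Subgroup.map_top_of_surjective _ (QuotientGroup.mk'_surjective K), h,
    Subgroup.map_eq_bot_iff, QuotientGroup.ker_mk'] at hmap
  exact hmap

instance powCommutator_normal [H.Normal] : (powCommutator p H).Normal := by
  refine ⟨fun n hn g => ?_⟩
  have hmap : (powCommutator p H).map (MulAut.conj g).toMonoidHom ≤ powCommutator p H := by
    rw [map_powCommutator]
    refine powCommutator_mono ?_
    rintro _ ⟨x, hx, rfl⟩
    exact Subgroup.Normal.conj_mem ‹_› x hx g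
  exact hmap ⟨n, hn, rfl⟩

theorem powCommutator_iterate_normal [H.Normal] (n : ℕ) : ((powCommutator p)^[n] H).Normal := by
  induction n with
  | zero => assumption
  | succ n ih => rw [Function.iterate_succ_apply']; exact powCommutator_normal

theorem frattini_eq_bot_of_pow_eq_one {Q : Type*} [CommGroup Q] (hp : p.Prime)
    (hQ : ∀ x : Q, x ^ p = 1) : frattini Q = ⊥ := by
  have : Fact p.Prime := ⟨hp⟩
  have : Module (ZMod p) (Additive Q) := AddCommGroup.zmodModule (G := Additive Q) hQ
  let e : Subgroup Q ≃o Submodule (ZMod p) (Additive Q) :=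
    Subgroup.toAddSubgroup.trans (AddSubgroup.toZModSubmodule p)
  have hradical : Order.radical (Submodule (ZMod p) (Additive Q)) = ⊥ :=
    sInf_eq_iInf.symm.trans (IsSemisimpleModule.jacobson_eq_bot (ZMod p) (Additive Q))
  exact e.injective (e.map_radical.trans (hradical.trans (map_bot e).symm))

theorem frattini_le_powCommutator_top (hp : p.Prime) :
    frattini G ≤ powCommutator p (⊤ : Subgroup G) := by
  let P : Subgroup G := powCommutator p ⊤
  have hcomm : IsMulCommutative (G ⧸ P) :=
    Subgroup.Normal.quotient_commutative_iff_commutator_le.2 le_sup_left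
  have hpow : ∀ x : G ⧸ P, x ^ p = 1 := by
    rintro ⟨x⟩
    exact (QuotientGroup.eq_one_iff (x ^ p)).2 (pow_mem_powCommutator (Subgroup.mem_top x))
  have h := frattini_le_comap_frattini_of_surjective (QuotientGroup.mk'_surjective P)
  rwa [frattini_eq_bot_of_pow_eq_one hp hpow, MonoidHom.comap_bot, QuotientGroup.ker_mk'] at h

theorem frattiniSeries_le_powCommutator_iterate (hp : p.Prime) (n : ℕ) :
    frattiniSeries G n ≤ (powCommutator p)^[n] ⊤ := by
  induction n with
  | zero => exact le_rfl
  | succ n ih =>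
    rw [Function.iterate_succ_apply']
    calc (frattini (frattiniSeries G n)).map (frattiniSeries G n).subtype
        ≤ (powCommutator p ⊤).map (frattiniSeries G n).subtype :=
          Subgroup.map_mono (frattini_le_powCommutator_top hp)
      _ = powCommutator p (frattiniSeries G n) := by
          rw [map_powCommutator, ← MonoidHom.range_eq_map, Subgroup.range_subtype]
      _ ≤ powCommutator p ((powCommutator p)^[n] ⊤) := powCommutator_mono ih

end PowCommutator

section Nilpotent

variable {G : Type*} [Group G]

theorem exists_notMem_forall_commutator_mem [Group.IsNilpotent G] {A K : Subgroup G} [K.Normal]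
    (hKA : ¬ K ≤ A) : ∃ x ∈ K, x ∉ A ∧ ∀ g : G, ⁅x, g⁆ ∈ A := by
  let L : ℕ → Subgroup G := fun n => K ⊓ (⊤ : Subgroup G).lowerCentralSeries n
  obtain ⟨n, hnA, hn⟩ : ∃ n, ¬ L n ≤ A ∧ L (n + 1) ≤ A := by
    by_contra! hstep
    obtain ⟨c, hc⟩ := Subgroup.nilpotent_iff_lowerCentralSeries.1 ‹_›
    have hL : ∀ n, ¬ L n ≤ A := fun n => by
      induction n with
      | zero => simpa [L] using hKA
      | succ n ih => exact hstep n ih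
    exact hL c (by simp [L, hc])
  obtain ⟨x, hx, hxA⟩ := SetLike.not_le_iff_exists.1 hnA
  refine ⟨x, hx.1, hxA, fun g => hn ⟨?_, Subgroup.commutator_mem_commutator hx.2 trivial⟩⟩
  exact Subgroup.commutator_le_left K ⊤ (Subgroup.commutator_mem_commutator hx.1 trivial)

theorem normal_sup_zpowers_of_commutator_mem {A : Subgroup G} [A.Normal] {x : G}
    (hx : ∀ g, ⁅x, g⁆ ∈ A) : (A ⊔ Subgroup.zpowers x).Normal := by
  have hcentral : (x : G ⧸ A) ∈ Subgroup.center (G ⧸ A) := by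
    refine Subgroup.mem_center_iff.2 fun y => y.inductionOn' fun g => ?_
    have hxg := (QuotientGroup.eq_one_iff ⁅x, g⁆).2 (hx g)
    exact (commutatorElement_eq_one_iff_mul_comm.1 hxg).symm
  have : (Subgroup.zpowers (x : G ⧸ A)).Normal := by
    rw [← Subgroup.commutator_top_right_le_iff,
      Subgroup.commutator_top_right_eq_bot_iff_le_center.2 (Subgroup.zpowers_le.2 hcentral)]
    exact bot_le
  have hcomap : A ⊔ Subgroup.zpowers x =
      (Subgroup.zpowers (x : G ⧸ A)).comap (QuotientGroup.mk' A) := by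
    rw [← QuotientGroup.mk'_apply, ← MonoidHom.map_zpowers, Subgroup.comap_map_eq,
      QuotientGroup.ker_mk', sup_comm]
  rw [hcomap]
  infer_instance

theorem isMulCommutative_sup {A B : Subgroup G} [IsMulCommutative A] [IsMulCommutative B]
    (hBA : B ≤ Subgroup.centralizer (A : Set G)) : IsMulCommutative ↥(A ⊔ B) := by
  rw [← Subgroup.le_centralizer_iff_isMulCommutative] at *
  exact sup_le (Subgroup.le_centralizer_iff.1 (sup_le ‹_› hBA))
    (Subgroup.le_centralizer_iff.1 (sup_le (Subgroup.le_centralizer_iff.1 hBA) ‹_›))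

theorem exists_normal_centralizer_eq_self [Finite G] [Group.IsNilpotent G] :
    ∃ A : Subgroup G, A.Normal ∧ Subgroup.centralizer (A : Set G) = A := by
  obtain ⟨A, hA⟩ := (Set.toFinite {K : Subgroup G | K.Normal ∧ IsMulCommutative K}).exists_maximal
    ⟨⊥, inferInstance, inferInstance⟩
  obtain ⟨hnormal, hcomm⟩ := hA.prop
  refine ⟨A, hnormal, le_antisymm ?_ (Subgroup.le_centralizer_iff_isMulCommutative.2 hcomm)⟩
  by_contra hCA
  obtain ⟨x, hxC, hxA, hx⟩ := exists_notMem_forall_commutator_mem hCA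
  have hmax := hA.le_of_ge ⟨normal_sup_zpowers_of_commutator_mem hx,
    isMulCommutative_sup (Subgroup.zpowers_le.2 hxC)⟩ le_sup_left
  exact hxA (hmax (Subgroup.mem_sup_right (Subgroup.mem_zpowers x)))

end Nilpotent

section PGroup

variable {G : Type*} [Group G] {p : ℕ}

theorem exists_normal_index_eq_prime [Finite G] (hp : p.Prime) (hG : IsPGroup p G)
    {T : Subgroup G} (hT : T ≠ ⊤) : ∃ H : Subgroup G, T ≤ H ∧ H.Normal ∧ H.index = p := by
  have : Fact p.Prime := ⟨hp⟩
  obtain ⟨i, hi⟩ := IsPGroup.iff_card.1 (hG.to_subgroup T)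
  have : Nontrivial G := Subgroup.nontrivial_iff.1 ⟨T, ⊤, hT⟩
  obtain ⟨r, hr, hcard⟩ := hG.nontrivial_iff_card.1 this
  obtain ⟨n, rfl⟩ := Nat.exists_eq_add_one.2 hr
  have hin : i ≤ n := by
    have hlt : Nat.card T < Nat.card G :=
      (Subgroup.card_le_card_group T).lt_of_ne (mt (Subgroup.eq_top_of_card_eq T) hT)
    rwa [hi, hcard, Nat.pow_lt_pow_iff_right hp.one_lt, Nat.lt_succ_iff] at hlt
  obtain ⟨H, hH, hTH⟩ :=
    Sylow.exists_subgroup_card_pow_prime_le p (hcard ▸ pow_dvd_pow p n.le_succ) T hi hin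
  have hindex : H.index = p := by
    refine Nat.eq_of_mul_eq_mul_left (pow_pos hp.pos n) ?_
    rw [← hH, H.card_mul_index, hcard, hH, pow_succ]
  refine ⟨H, hTH, Subgroup.normal_of_index_eq_minFac_card ?_, hindex⟩
  rw [hindex, hcard, Nat.Prime.pow_minFac hp n.succ_ne_zero]

theorem powCommutator_top_le_of_index_eq (hp : p.Prime) {H : Subgroup G} [H.Normal]
    (hindex : H.index = p) : powCommutator p ⊤ ≤ H := by
  have : Fact p.Prime := ⟨hp⟩
  have := isCyclic_of_prime_card hindex
  refine powCommutator_le_iff.2 ⟨fun x _ y _ => ?_, fun x _ => ?_⟩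
  · exact (QuotientGroup.eq_one_iff ⁅x, y⁆).1
      (commutatorElement_eq_one_iff_mul_comm.2 (mul_comm' (x : G ⧸ H) y))
  · rw [← QuotientGroup.eq_one_iff, QuotientGroup.mk_pow, ← hindex]
    exact pow_card_eq_one'

end PGroup

section ConjugationOnCyclic

variable {G : Type*} [Group G] {p : ℕ} {a b : G}

theorem pow_mul_mul_pow_inv_eq_zpow {w : ℤ} (hw : b * a * b⁻¹ = a ^ w) (n : ℕ) :
    b ^ n * a * (b ^ n)⁻¹ = a ^ w ^ n := by
  induction n with
  | zero => simp
  | succ n ih =>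
    calc b ^ (n + 1) * a * (b ^ (n + 1))⁻¹ = b * (b ^ n * a * (b ^ n)⁻¹) * b⁻¹ := by group
      _ = a ^ w ^ (n + 1) := by rw [ih, ← conj_zpow, hw, ← zpow_mul, pow_succ']

theorem exists_conj_eq_zpow_dvd_sub_one (hp : p.Prime) (hG : IsPGroup p G)
    (ha : (Subgroup.zpowers a).Normal) (g : G) :
    ∃ w : ℤ, g * a * g⁻¹ = a ^ w ∧ (p : ℤ) ∣ w - 1 := by
  have : Fact p.Prime := ⟨hp⟩
  rcases eq_or_ne a 1 with rfl | ha1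
  · exact ⟨1, by simp⟩
  obtain ⟨w, hw⟩ := ha.conj_mem a (Subgroup.mem_zpowers a) g
  refine ⟨w, hw.symm, ?_⟩
  obtain ⟨n, hn⟩ := hG g
  have hfix : a ^ (w ^ p ^ n - 1) = 1 := by
    rw [zpow_sub, ← pow_mul_mul_pow_inv_eq_zpow hw.symm, hn]
    simp
  have hdvd : (p : ℤ) ∣ w ^ p ^ n - 1 :=
    (Int.natCast_dvd_natCast.2 (hG.dvd_orderOf ha1)).trans (orderOf_dvd_iff_zpow_eq_one.2 hfix)
  rw [← ZMod.intCast_zmod_eq_zero_iff_dvd] at hdvd ⊢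
  push_cast at hdvd ⊢
  rwa [ZMod.pow_card_pow] at hdvd

theorem pow_dvd_pow_pow_sub_one {R : Type*} [CommRing R] {w : R} {j : ℕ} (hw : (p : R) ∣ w - 1)
    (hj : (p : R) ^ j ∣ w - 1) (i : ℕ) : (p : R) ^ (j + i) ∣ w ^ p ^ i - 1 := by
  induction i with
  | zero => simpa using hj
  | succ i ih =>
    have hsum : (p : R) ∣ ∑ l ∈ Finset.range p, (w ^ p ^ i) ^ l := by
      simpa using dvd_geom_sum₂_self (hw.trans (sub_one_dvd_pow_sub_one w (p ^ i)))
    rw [pow_succ p i, pow_mul, ← mul_geom_sum, ← add_assoc, pow_succ]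
    exact mul_dvd_mul ih hsum

-- Let `p ^ j = gcd (w - 1, p ^ m)`. Then `b ^ p ^ (m - j)` centralizes `a`, so it is some `a ^ i`,
-- and since `b` commutes with `a ^ i` the order of `a ^ i` divides `p ^ j`.
theorem pow_orderOf_eq_one_of_conj_eq_zpow (hp : p.Prime) {m : ℕ} (hm : orderOf a = p ^ m) {w : ℤ}
    (hw : b * a * b⁻¹ = a ^ w) (hpw : (p : ℤ) ∣ w - 1)
    (hcent : ∀ n : ℕ, Commute (b ^ n) a → b ^ n ∈ Subgroup.zpowers a) : b ^ orderOf a = 1 := by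
  have zpow_eq_one_iff (i : ℤ) : a ^ i = 1 ↔ (p : ℤ) ^ m ∣ i := by
    rw [← orderOf_dvd_iff_zpow_eq_one, hm, Nat.cast_pow]
  obtain ⟨j, hjm, hj⟩ := (Nat.dvd_prime_pow hp).1 (Int.natCast_dvd_natCast.1
    (Int.gcd_dvd_right (w - 1) ((p : ℤ) ^ m) : _ ∣ ((p ^ m : ℕ) : ℤ)))
  obtain ⟨i, hi⟩ : ∃ i : ℤ, a ^ i = b ^ p ^ (m - j) := by
    refine Subgroup.mem_zpowers_iff.1 (hcent _ (mul_inv_eq_iff_eq_mul.1 ?_))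
    have hpj : (p : ℤ) ^ j ∣ w - 1 := by exact_mod_cast hj ▸ Int.gcd_dvd_left (w - 1) ((p : ℤ) ^ m)
    have hlift := pow_dvd_pow_pow_sub_one hpw hpj (m - j)
    rw [Nat.add_sub_cancel' hjm, ← zpow_eq_one_iff, zpow_sub, zpow_one, mul_inv_eq_one] at hlift
    rw [pow_mul_mul_pow_inv_eq_zpow hw, hlift]
  have hiw : (p : ℤ) ^ m ∣ i * (w - 1) := by
    have hfix : b * a ^ i * b⁻¹ = a ^ i := by rw [hi]; group
    rw [← zpow_eq_one_iff, mul_sub, mul_one, zpow_sub, mul_comm, zpow_mul, ← hw, conj_zpow, hfix,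
      mul_inv_cancel]
  have hij : (p : ℤ) ^ m ∣ i * (p : ℤ) ^ j := by
    have := Int.dvd_coe_gcd hiw (dvd_mul_left ((p : ℤ) ^ m) i)
    rw [Int.gcd_mul_left, hj, Nat.cast_mul, Int.natCast_natAbs, Nat.cast_pow] at this
    exact this.trans (mul_dvd_mul_right (abs_dvd_self i) _)
  calc b ^ orderOf a = (a ^ i) ^ p ^ j := by
        rw [hi, ← pow_mul, ← pow_add, Nat.sub_add_cancel hjm, hm]
    _ = 1 := by rwa [← zpow_natCast, ← zpow_mul, zpow_eq_one_iff, Nat.cast_pow]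

end ConjugationOnCyclic

section TwoGenerators

variable {G : Type*} [Group G] {p : ℕ} {a b : G}

theorem powCommutator_closure_le_of_commute {S : Set G} (hS : ∀ x ∈ S, ∀ y ∈ S, x * y = y * x) :
    powCommutator p (Subgroup.closure S) ≤ Subgroup.closure ((· ^ p) '' S) := by
  have := Subgroup.isMulCommutative_closure hS
  have hcomm {x y : G} (hx : x ∈ Subgroup.closure S) (hy : y ∈ Subgroup.closure S) :
      Commute x y := setLike_mul_comm hx hy
  refine powCommutator_le_iff.2 ⟨fun x hx y hy => ?_, fun x hx => ?_⟩
  · rw [(hcomm hx hy).commutator_eq]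
    exact one_mem _
  · induction hx using Subgroup.closure_induction with
    | mem x hx => exact Subgroup.subset_closure ⟨x, hx, rfl⟩
    | one => simpa only [one_pow] using one_mem _
    | mul x y hx hy hxp hyp => rw [(hcomm hx hy).mul_pow]; exact mul_mem hxp hyp
    | inv x hx hxp => rw [inv_pow]; exact inv_mem hxp

theorem powCommutator_closure_pair_le [(Subgroup.zpowers (a ^ p)).Normal]
    (hab : ⁅a, b⁆ ∈ Subgroup.zpowers (a ^ p)) :
    powCommutator p (Subgroup.closure {a, b}) ≤ Subgroup.closure {a ^ p, b ^ p} := by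
  let π := QuotientGroup.mk' (Subgroup.zpowers (a ^ p))
  have hcomm : Commute (π a) (π b) :=
    commutatorElement_eq_one_iff_mul_comm.1 ((QuotientGroup.eq_one_iff ⁅a, b⁆).2 hab)
  have himage : (powCommutator p (Subgroup.closure {a, b})).map π ≤
      (Subgroup.closure {a ^ p, b ^ p}).map π := by
    rw [map_powCommutator, MonoidHom.map_closure, MonoidHom.map_closure]
    refine (powCommutator_closure_le_of_commute ?_).trans (le_of_eq ?_)
    · rintro _ ⟨_, rfl | rfl, rfl⟩ _ ⟨_, rfl | rfl, rfl⟩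
      exacts [rfl, hcomm, hcomm.symm, rfl]
    · simp only [Set.image_pair, map_pow]
  rw [Subgroup.map_le_iff_le_comap, Subgroup.comap_map_eq, QuotientGroup.ker_mk'] at himage
  exact himage.trans (sup_le le_rfl (Subgroup.zpowers_le.2 (Subgroup.subset_closure (Or.inl rfl))))

theorem normal_zpowers_of_conj_eq_zpow (h : ∀ g : G, ∃ w : ℤ, g * a * g⁻¹ = a ^ w) (n : ℕ) :
    (Subgroup.zpowers (a ^ n)).Normal := by
  refine ⟨?_⟩
  rintro _ ⟨i, rfl⟩ g
  obtain ⟨w, hw⟩ := h g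
  refine ⟨w * i, ?_⟩
  calc (a ^ n) ^ (w * i) = ((a ^ w) ^ n) ^ i := by
        rw [zpow_mul, ← zpow_natCast a, zpow_comm a, zpow_natCast]
    _ = g * (a ^ n) ^ i * g⁻¹ := by rw [← hw, conj_pow, conj_zpow]

theorem powCommutator_iterate_closure_pair_le
    (h : ∀ g : G, ∃ w : ℤ, g * a * g⁻¹ = a ^ w ∧ (p : ℤ) ∣ w - 1) (n : ℕ) :
    (powCommutator p)^[n] (Subgroup.closure {a, b}) ≤
      Subgroup.closure {a ^ p ^ n, b ^ p ^ n} := by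
  induction n with
  | zero => simp
  | succ n ih =>
    rw [Function.iterate_succ_apply', pow_succ, pow_mul, pow_mul]
    refine (powCommutator_mono ih).trans ?_
    have : (Subgroup.zpowers ((a ^ p ^ n) ^ p)).Normal := by
      rw [← pow_mul]
      exact normal_zpowers_of_conj_eq_zpow (fun g => (h g).imp fun _ => And.left) _
    refine powCommutator_closure_pair_le ?_
    obtain ⟨w, hw, c, hc⟩ := h (b ^ p ^ n)
    rw [← inv_mem_iff, commutatorElement_inv, commutatorElement_def]
    refine ⟨c, ?_⟩
    calc ((a ^ p ^ n) ^ p) ^ c = (a ^ p ^ n) ^ (w - 1) := by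
          rw [hc, zpow_mul, zpow_natCast]
      _ = b ^ p ^ n * a ^ p ^ n * (b ^ p ^ n)⁻¹ * (a ^ p ^ n)⁻¹ := by
          rw [← conj_pow, hw, zpow_sub, zpow_one, ← zpow_natCast a, zpow_comm,
            zpow_natCast (a ^ w)]

theorem powCommutator_iterate_top_eq_bot (hp : p.Prime) (hG : IsPGroup p G)
    [ha : (Subgroup.zpowers a).Normal]
    (hself : Subgroup.centralizer (Subgroup.zpowers a : Set G) ≤ Subgroup.zpowers a)
    (hab : Subgroup.closure {a, b} = ⊤) {m : ℕ} (hm : orderOf a = p ^ m) :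
    (powCommutator p)^[m] (⊤ : Subgroup G) = ⊥ := by
  have hconj := exists_conj_eq_zpow_dvd_sub_one hp hG ha
  have hb : b ^ orderOf a = 1 := by
    obtain ⟨w, hw, hpw⟩ := hconj b
    refine pow_orderOf_eq_one_of_conj_eq_zpow hp hm hw hpw fun n hn => hself ?_
    rw [Subgroup.zpowers_eq_closure, Subgroup.centralizer_closure,
      Subgroup.mem_centralizer_singleton_iff]
    exact hn
  have hle := powCommutator_iterate_closure_pair_le (b := b) hconj m
  rw [hab, ← hm, pow_orderOf_eq_one, hb, Set.pair_eq_singleton,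
    Subgroup.closure_singleton_one] at hle
  exact eq_bot_iff.2 hle

theorem exists_closure_pair_eq_top {C : Type*} [Group C] [IsCyclic C] (φ : G →* C)
    (hφ : φ.ker ≤ Subgroup.zpowers a) : ∃ b : G, Subgroup.closure {a, b} = ⊤ := by
  obtain ⟨⟨_, b, rfl⟩, hb⟩ := IsCyclic.exists_zpow_surjective (G := φ.range)
  refine ⟨b, eq_top_iff.2 fun g _ => ?_⟩
  obtain ⟨i, hi⟩ := hb ⟨φ g, g, rfl⟩
  have hker : g * (b ^ i)⁻¹ ∈ φ.ker := by
    have hval : φ b ^ i = φ g := congrArg Subtype.val hi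
    rw [MonoidHom.mem_ker, map_mul, map_inv, map_zpow, hval, mul_inv_cancel]
  have hle : Subgroup.zpowers a ≤ Subgroup.closure {a, b} :=
    Subgroup.zpowers_le.2 (Subgroup.subset_closure (Or.inl rfl))
  have hbmem : b ∈ Subgroup.closure {a, b} := Subgroup.subset_closure (Or.inr rfl)
  rw [← inv_mul_cancel_right g (b ^ i)]
  exact mul_mem (hle (hφ hker)) (zpow_mem hbmem i)

end TwoGenerators

section Arithmetic

variable {p q N m : ℕ}

-- The exponent `d` makes `q ^ d ≡ 1` modulo `p`, and modulo `4` when `p = 2`, so that lifting the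
-- exponent applies.
theorem exists_padicValNat_pow_pow_sub_one_eq (hp : p.Prime) (hq : 2 ≤ q) (hpq : ¬p ∣ q)
    (hN : N ≠ 0) : ∃ d, 1 ≤ d ∧ d ≤ p ∧
      padicValNat p ((q ^ d) ^ N - 1) = padicValNat p (q ^ d - 1) + padicValNat p N := by
  have : Fact p.Prime := ⟨hp⟩
  rcases hp.eq_two_or_odd' with rfl | hodd
  · refine ⟨2, one_le_two, le_rfl, ?_⟩
    have htwo := padicValNat.pow_two_sub_one (x := q) (n := 2) (by lia) hpq two_ne_zero even_two
    have hmul := padicValNat.pow_two_sub_one (x := q) (n := 2 * N) (by lia) hpq (by lia) (by simp)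
    rw [padicValNat_self] at htwo
    rw [padicValNat.mul two_ne_zero hN, padicValNat_self] at hmul
    rw [← pow_mul]
    lia
  · have hp2 := hp.two_le
    have hlt : 1 < q ^ (p - 1) := Nat.one_lt_pow (by lia) hq
    have hfermat : q ^ (p - 1) ≡ 1 [MOD p] :=
      Nat.totient_prime hp ▸ Nat.ModEq.pow_totient ((hp.coprime_iff_not_dvd.2 hpq).symm)
    have hdvd : p ∣ q ^ (p - 1) - 1 := (Nat.modEq_iff_dvd' hlt.le).1 hfermat.symm
    refine ⟨p - 1, by lia, by lia, ?_⟩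
    simpa only [one_pow] using
      padicValNat.pow_sub_pow hodd hlt hdvd (fun h => hpq (hp.dvd_of_dvd_pow h)) hN

theorem le_factorization_add_log_of_pow_dvd_pow_sub_one (hp : p.Prime) (hq : 2 ≤ q) (hN : N ≠ 0)
    (h : p ^ m ∣ q ^ N - 1) : m ≤ N.factorization p + Nat.log p (q ^ p) := by
  have : Fact p.Prime := ⟨hp⟩
  rcases Nat.eq_zero_or_pos m with rfl | hm
  · exact Nat.zero_le _
  have hpq : ¬p ∣ q := fun hdvd => hp.not_dvd_one <|
    (Nat.dvd_sub_iff_right (Nat.one_le_pow N q (by lia)) (dvd_pow hdvd hN)).1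
      ((dvd_pow_self p hm.ne').trans h)
  obtain ⟨d, hd, hdp, hval⟩ := exists_padicValNat_pow_pow_sub_one_eq hp hq hpq hN
  have hqd : 1 < q ^ d := Nat.one_lt_pow (by lia) hq
  have hqdN : 1 < (q ^ d) ^ N := Nat.one_lt_pow hN hqd
  have hle : m ≤ padicValNat p ((q ^ d) ^ N - 1) := by
    rw [← padicValNat_dvd_iff_le (by lia), ← pow_mul, mul_comm, pow_mul]
    exact h.trans (by simpa only [one_pow] using Nat.sub_dvd_pow_sub_pow (q ^ N) 1 d)
  have hlog : padicValNat p (q ^ d - 1) ≤ Nat.log p (q ^ p) := by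
    refine Nat.le_log_of_pow_le hp.one_lt ?_
    calc p ^ padicValNat p (q ^ d - 1) ≤ q ^ d - 1 := Nat.le_of_dvd (by lia) pow_padicValNat_dvd
      _ ≤ q ^ d := Nat.sub_le _ _
      _ ≤ q ^ p := Nat.pow_le_pow_right (by lia) hdp
  rw [Nat.factorization_def N hp]
  lia

end Arithmetic

section Imprimitivity

variable {k G V : Type*} [Field k] [Group G] [AddCommGroup V] [Module k V]
  {ρ : Representation k G V} {H : Subgroup G}

theorem toSubmodule_eq_top_of_isIrreducibleRep (hρ : ρ.IsIrreducibleRep) (W : Subrepresentation ρ)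
    (hW : W.toSubmodule ≠ ⊥) : W.toSubmodule = ⊤ :=
  (hρ.2 W.toSubmodule fun g => Submodule.map_le_iff_le_comap.2 fun _ hv =>
    W.apply_mem_toSubmodule g hv).resolve_left hW

theorem map_toSubmodule_out (U : Subrepresentation (ρ.comp H.subtype)) (g : G) :
    U.toSubmodule.map (ρ (g : G ⧸ H).out) = U.toSubmodule.map (ρ g) := by
  obtain ⟨h, hh⟩ := QuotientGroup.mk_out_eq_mul H g
  have hle (h : H) : U.toSubmodule.map (ρ h) ≤ U.toSubmodule :=
    Submodule.map_le_iff_le_comap.2 fun _ hv => U.apply_mem_toSubmodule h hv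
  have heq : U.toSubmodule.map (ρ h) = U.toSubmodule := by
    refine (hle h).antisymm fun v hv => ⟨ρ h⁻¹ v, U.apply_mem_toSubmodule h⁻¹ hv, ?_⟩
    exact ρ.self_inv_apply h v
  rw [hh, map_mul, Module.End.mul_eq_comp, Submodule.map_comp, heq]

/-- The `H`-subrepresentation `U` is a block of imprimitivity for `G`: its translates, indexed by
the cosets of `H`, are linearly independent. The chosen coset representatives are immaterial, see
`map_toSubmodule_out`. -/
def IsImprimitivityBlock (U : Subrepresentation (ρ.comp H.subtype)) : Prop :=
  iSupIndep fun q : G ⧸ H => U.toSubmodule.map (ρ q.out)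

theorem iSup_map_out_eq_top (hρ : ρ.IsIrreducibleRep) (U : Subrepresentation (ρ.comp H.subtype))
    (hU : U.toSubmodule ≠ ⊥) : ⨆ q : G ⧸ H, U.toSubmodule.map (ρ q.out) = ⊤ := by
  have hle (g : G) : U.toSubmodule.map (ρ g) ≤ ⨆ q : G ⧸ H, U.toSubmodule.map (ρ q.out) :=
    (map_toSubmodule_out U g).ge.trans (le_iSup (fun q : G ⧸ H => U.toSubmodule.map (ρ q.out)) g)
  let W : Subrepresentation ρ :=
    ⟨⨆ q : G ⧸ H, U.toSubmodule.map (ρ q.out), fun g v hv => by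
      refine (Submodule.map_iSup (ρ g) _).trans_le (iSup_le fun q => ?_) ⟨v, hv, rfl⟩
      rw [← Submodule.map_comp, ← Module.End.mul_eq_comp, ← map_mul]
      exact hle _⟩
  refine toSubmodule_eq_top_of_isIrreducibleRep hρ W (ne_bot_of_le_ne_bot hU ?_)
  simpa only [map_one, Module.End.one_eq_id, Submodule.map_id] using hle 1

theorem index_mul_finrank_eq [FiniteDimensional k V] [H.FiniteIndex] (hρ : ρ.IsIrreducibleRep)
    {U : Subrepresentation (ρ.comp H.subtype)} (hblock : IsImprimitivityBlock U)
    (hU : U.toSubmodule ≠ ⊥) :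
    H.index * Module.finrank k U.toSubmodule = Module.finrank k V := by
  classical
  have := Fintype.ofFinite (G ⧸ H)
  have hinternal := DirectSum.isInternal_submodule_of_iSupIndep_of_iSup_eq_top hblock
    (iSup_map_out_eq_top hρ U hU)
  have hfinrank (q : G ⧸ H) :
      Module.finrank k (U.toSubmodule.map (ρ q.out)) = Module.finrank k U.toSubmodule :=
    (Submodule.equivMapOfInjective (ρ q.out) (ρ.apply_bijective q.out).injective
      U.toSubmodule).finrank_eq.symm
  rw [← (LinearEquiv.ofBijective (DirectSum.coeLinearMap _) hinternal).finrank_eq,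
    Module.finrank_directSum,
    Finset.sum_congr rfl fun q _ => hfinrank q, Finset.sum_const, Finset.card_univ, smul_eq_mul,
    ← Nat.card_eq_fintype_card, Subgroup.index]

theorem isIrreducibleRep_toRepresentation [FiniteDimensional k V] [H.FiniteIndex]
    (hρ : ρ.IsIrreducibleRep) {U : Subrepresentation (ρ.comp H.subtype)}
    (hblock : IsImprimitivityBlock U) (hU : U.toSubmodule ≠ ⊥) :
    U.toRepresentation.IsIrreducibleRep := by
  refine ⟨Submodule.nontrivial_iff_ne_bot.2 hU, fun W hW => or_iff_not_imp_left.2 fun hbot => ?_⟩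
  let W' : Subrepresentation (ρ.comp H.subtype) :=
    ⟨W.map U.toSubmodule.subtype, by
      rintro h _ ⟨w, hw, rfl⟩
      exact ⟨U.toRepresentation h w, hW h ⟨w, hw, rfl⟩, rfl⟩⟩
  -- An invariant subspace of a block is a block, so comparing dimensions gives `W = ⊤`.
  have hW' : IsImprimitivityBlock W' := iSupIndep.mono hblock fun q =>
    Submodule.map_mono (Submodule.map_subtype_le U.toSubmodule W)
  have hbot' : W'.toSubmodule ≠ ⊥ := fun h =>
    hbot (Submodule.map_injective_of_injective U.toSubmodule.injective_subtype
      (h.trans (Submodule.map_bot _).symm))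
  have hcard := (index_mul_finrank_eq hρ hW' hbot').trans (index_mul_finrank_eq hρ hblock hU).symm
  refine Submodule.eq_top_of_finrank_eq ?_
  rw [← Nat.eq_of_mul_eq_mul_left (Nat.pos_of_ne_zero H.index_ne_zero_of_finite) hcard]
  exact (Submodule.finrank_map_subtype_eq U.toSubmodule W).symm

theorem le_ker_of_invariants_ne_bot (hρ : ρ.IsIrreducibleRep) {K : Subgroup G} [K.Normal]
    (hK : Representation.invariants (ρ.comp K.subtype) ≠ ⊥) : K ≤ MonoidHom.ker ρ := by
  have htop : Representation.invariants (ρ.comp K.subtype) = ⊤ :=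
    toSubmodule_eq_top_of_isIrreducibleRep hρ
      ⟨_, fun g _ hv => Representation.le_comap_invariants ρ K g hv⟩ hK
  intro x hx
  refine LinearMap.ext fun v => ?_
  exact htop.ge (Submodule.mem_top (x := v)) ⟨x, hx⟩

end Imprimitivity

section Clifford

variable {k G V E : Type*} [Field k] [Group G] [AddCommGroup V] [Module k V] [CommRing E]
  [Module E V] [MulSemiringAction G E] {ρ : Representation k G V} {H : Subgroup G} {m : Ideal E}

/-- The representation `ρ` is semilinear over the ring `E`, on which `G` acts by automorphisms. -/
def IsSemilinearRep (E : Type*) [CommRing E] [Module E V] [MulSemiringAction G E]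
    (ρ : Representation k G V) : Prop :=
  ∀ (g : G) (x : E) (v : V), ρ g (x • v) = (g • x) • ρ g v

theorem exists_isMaximal_torsionBySet_ne_bot [IsArtinian E V] [Nontrivial V] :
    ∃ m : Ideal E, m.IsMaximal ∧ Submodule.torsionBySet E V (m : Set E) ≠ ⊥ := by
  obtain ⟨S, hS, -⟩ := (eq_bot_or_exists_atom_le (⊤ : Submodule E V)).resolve_left top_ne_bot
  have : IsSimpleModule E S := isSimpleModule_iff_isAtom.2 hS
  refine ⟨Module.annihilator E S, IsSimpleModule.annihilator_isMaximal, ?_⟩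
  refine ne_bot_of_le_ne_bot hS.1 fun s hs => (Submodule.mem_torsionBySet_iff _ _).2 ?_
  rintro ⟨x, hx⟩
  exact congrArg Subtype.val (Module.mem_annihilator.1 hx ⟨s, hs⟩)

theorem apply_mem_torsionBySet (hE : IsSemilinearRep E ρ) {I J : Ideal E} {g : G}
    (h : J ≤ g • I) {v : V} (hv : v ∈ Submodule.torsionBySet E V (I : Set E)) :
    ρ g v ∈ Submodule.torsionBySet E V (J : Set E) := by
  refine (Submodule.mem_torsionBySet_iff _ _).2 fun x => ?_
  have hx : g⁻¹ • (x : E) ∈ I := Ideal.mem_pointwise_smul_iff_inv_smul_mem.1 (h x.2)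
  calc (x : E) • ρ g v = ρ g ((g⁻¹ • (x : E)) • v) := by rw [hE, smul_inv_smul]
    _ = 0 := by rw [(Submodule.mem_torsionBySet_iff _ _).1 hv ⟨_, hx⟩, map_zero]

theorem isField_of_forall_smul_eq [SMul k E] [IsScalarTower k E V] [FaithfulSMul E V]
    (hρ : ρ.IsIrreducibleRep) (hE : IsSemilinearRep E ρ) (hmax : m.IsMaximal)
    (hm : Submodule.torsionBySet E V (m : Set E) ≠ ⊥) (hfix : ∀ g : G, g • m = m) : IsField E := by
  have : Nontrivial V := hρ.1
  have : Nontrivial E := Module.nontrivial E V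
  let W : Subrepresentation ρ :=
    ⟨(Submodule.torsionBySet E V (m : Set E)).restrictScalars k,
      fun g _ hv => apply_mem_torsionBySet hE (hfix g).ge hv⟩
  have htop := toSubmodule_eq_top_of_isIrreducibleRep hρ W
    (mt (Submodule.restrictScalars_eq_bot_iff k E V).1 hm)
  have hbot : m = ⊥ := by
    refine eq_bot_iff.2 fun x hx => FaithfulSMul.eq_of_smul_eq_smul (α := V) fun v => ?_
    rw [zero_smul]
    exact (Submodule.mem_torsionBySet_iff _ _).1 (htop.ge (Submodule.mem_top (x := v))) ⟨x, hx⟩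
  exact Ring.isField_iff_maximal_bot.2 (hbot ▸ hmax)

/-- The intersection of the translates of the ideal `m` by the elements of the coset `q`. -/
def cosetInf (m : Ideal E) (q : G ⧸ H) : Ideal E :=
  ⨅ g : {g : G // (g : G ⧸ H) = q}, (g : G) • m

theorem cosetInf_le (g : G) : cosetInf m (g : G ⧸ H) ≤ g • m :=
  iInf_le (fun h : {h : G // (h : G ⧸ H) = g} => (h : G) • m) ⟨g, rfl⟩

theorem cosetInf_smul_le (g : G) (q : G ⧸ H) : cosetInf m (g • q) ≤ g • cosetInf m q := by
  intro x hx
  simp only [cosetInf, Submodule.mem_iInf, Ideal.mem_pointwise_smul_iff_inv_smul_mem] at hx ⊢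
  rintro ⟨h, rfl⟩
  simpa only [mul_inv_rev, mul_smul] using hx ⟨g * h, rfl⟩

theorem cosetInf_sup_eq_top [Finite G] (hmax : m.IsMaximal) (hH : MulAction.stabilizer G m ≤ H)
    {q r : G ⧸ H} (hqr : q ≠ r) : cosetInf m q ⊔ cosetInf m r = ⊤ := by
  classical
  have := Fintype.ofFinite G
  have hsmul (g : G) : (g • m).IsMaximal := by
    rw [Ideal.pointwise_smul_eq_comap]
    exact Ideal.comap_isMaximal_of_equiv _
  have hinf (s : G ⧸ H) :
      cosetInf m s = ⨅ g ∈ (Finset.univ : Finset {g : G // (g : G ⧸ H) = s}), (g : G) • m := by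
    simp only [cosetInf, Finset.mem_univ, iInf_pos]
  rw [hinf, hinf]
  refine Ideal.iInf_sup_eq_top fun g _ => Ideal.sup_iInf_eq_top fun h _ =>
    (hsmul g).coprime_of_ne (hsmul h) fun heq => hqr ?_
  rw [← g.2, ← h.2, QuotientGroup.eq]
  exact hH (by rw [MulAction.mem_stabilizer_iff, mul_smul, ← heq, inv_smul_smul])

theorem iSupIndep_restrictScalars_torsionBySet [SMul k E] [IsScalarTower k E V] {ι : Type*}
    [Finite ι] {J : ι → Ideal E} (hJ : ∀ i j, i ≠ j → J i ⊔ J j = ⊤) :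
    iSupIndep fun i => (Submodule.torsionBySet E V (J i : Set E)).restrictScalars k := by
  have := Fintype.ofFinite ι
  have hindep : iSupIndep fun i => Submodule.torsionBySet E V (J i : Set E) :=
    iSupIndep_iff_supIndep_univ.2
      (Submodule.supIndep_torsionBySet_ideal fun i _ j _ hij => hJ i j hij)
  intro i
  refine Submodule.disjoint_def.2 fun v hv hsup => ?_
  simp only [← Submodule.restrictScalars_iSup] at hsup
  exact Submodule.disjoint_def.1 (hindep i) v hv hsup

theorem exists_isImprimitivityBlock_of_stabilizer_le [Finite G] [SMul k E] [IsScalarTower k E V]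
    (hE : IsSemilinearRep E ρ) (hmax : m.IsMaximal)
    (hm : Submodule.torsionBySet E V (m : Set E) ≠ ⊥) (hH : MulAction.stabilizer G m ≤ H) :
    ∃ U : Subrepresentation (ρ.comp H.subtype), IsImprimitivityBlock U ∧ U.toSubmodule ≠ ⊥ := by
  let U (q : G ⧸ H) : Submodule k V :=
    (Submodule.torsionBySet E V (cosetInf m q : Set E)).restrictScalars k
  have hmap (g : G) (q : G ⧸ H) : (U q).map (ρ g) ≤ U (g • q) :=
    Submodule.map_le_iff_le_comap.2 fun _ hv => apply_mem_torsionBySet hE (cosetInf_smul_le g q) hv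
  have hsmul_one (g : G) : g • ((1 : G) : G ⧸ H) = g := by
    rw [MulAction.Quotient.smul_coe, smul_eq_mul, mul_one]
  refine ⟨⟨U (1 : G), fun h v hv => ?_⟩, ?_, ?_⟩
  · have hh : ((h : G) : G ⧸ H) = (1 : G) := QuotientGroup.eq.2 (by simp)
    exact (hsmul_one h).trans hh ▸ hmap h _ ⟨v, hv, rfl⟩
  · refine iSupIndep.mono (iSupIndep_restrictScalars_torsionBySet fun q r hqr =>
      cosetInf_sup_eq_top hmax hH hqr) fun q => ?_
    refine (hmap q.out _).trans_eq ?_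
    rw [hsmul_one, QuotientGroup.out_eq']
  · refine ne_bot_of_le_ne_bot (mt (Submodule.restrictScalars_eq_bot_iff k E V).1 hm) ?_
    have hle : cosetInf m ((1 : G) : G ⧸ H) ≤ m := (cosetInf_le 1).trans_eq (one_smul G m)
    exact Submodule.torsionBySet_le_torsionBySet_of_subset hle

theorem isField_or_exists_isImprimitivityBlock {p : ℕ} (hp : p.Prime) (hG : IsPGroup p G) [Finite G]
    [FiniteDimensional k V] [Algebra k E] [IsScalarTower k E V] [FaithfulSMul E V]
    (hρ : ρ.IsIrreducibleRep) (hE : IsSemilinearRep E ρ) :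
    IsField E ∨ ∃ H : Subgroup G, H.Normal ∧ H.index = p ∧
      ∃ U : Subrepresentation (ρ.comp H.subtype), IsImprimitivityBlock U ∧ U.toSubmodule ≠ ⊥ := by
  have : Nontrivial V := hρ.1
  have : IsArtinian E V := isArtinian_of_tower k inferInstance
  obtain ⟨m, hmax, hm⟩ := exists_isMaximal_torsionBySet_ne_bot (E := E) (V := V)
  by_cases hfix : MulAction.stabilizer G m = ⊤
  · exact Or.inl (isField_of_forall_smul_eq hρ hE hmax hm fun g =>
      MulAction.mem_stabilizer_iff.1 (hfix ▸ Subgroup.mem_top g))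
  · obtain ⟨H, hle, hnormal, hindex⟩ := exists_normal_index_eq_prime hp hG hfix
    exact Or.inr ⟨H, hnormal, hindex, exists_isImprimitivityBlock_of_stabilizer_le hE hmax hm hle⟩

end Clifford

section EnvelopingAlgebra

variable {k G V : Type*} [Field k] [Group G] [AddCommGroup V] [Module k V]
  {ρ : Representation k G V} {A : Subgroup G}

theorem isCyclic_algEquiv_of_isField {E : Type*} [CommRing E] [Algebra k E] [Finite E]
    (hE : IsField E) : IsCyclic (E ≃ₐ[k] E) := by
  let := hE.toField
  exact (inferInstance : IsCyclic Gal(E/k))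

theorem orderOf_dvd_natCard_sub_one_of_isField {E V : Type*} [CommRing E] [Finite E]
    [AddCommGroup V] [Module E V] [Finite V] (hE : IsField E) {x : E} (hx : x ≠ 0) :
    orderOf x ∣ Nat.card V - 1 := by
  let := hE.toField
  cases nonempty_fintype E
  have hpow : x ^ Nat.card V = x := by
    rw [Module.natCard_eq_pow_finrank (K := E), Nat.card_eq_fintype_card]
    exact FiniteField.pow_card_pow _ x
  refine orderOf_dvd_of_pow_eq_one (mul_right_cancel₀ hx ?_)
  rw [← pow_succ, Nat.sub_add_cancel Nat.card_pos, hpow, one_mul]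

/-- The algebra of operators on `V` generated by the action of `A`. When `A` is normal, `G` acts on
it by conjugation. -/
def envelopingAlgebra (ρ : Representation k G V) (A : Subgroup G) :
    Subalgebra k (Module.End k V) :=
  Algebra.adjoin k (ρ '' A)

instance [IsMulCommutative A] : IsMulCommutative (envelopingAlgebra ρ A) := by
  refine Algebra.isMulCommutative_adjoin k ?_
  rintro _ ⟨x, hx, rfl⟩ _ ⟨y, hy, rfl⟩
  rw [← map_mul, ← map_mul, setLike_mul_comm hx hy]

theorem conj_smul_mem_envelopingAlgebra [A.Normal] (g : G) {x : Module.End k V}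
    (hx : x ∈ envelopingAlgebra ρ A) :
    ConjAct.toConjAct (ρ.asGroupHom g) • x ∈ envelopingAlgebra ρ A := by
  have hle : envelopingAlgebra ρ A ≤ (envelopingAlgebra ρ A).comap
      (MulSemiringAction.toAlgHom k _ (ConjAct.toConjAct (ρ.asGroupHom g))) := by
    refine Algebra.adjoin_le ?_
    rintro _ ⟨a, ha, rfl⟩
    refine Algebra.subset_adjoin ⟨g * a * g⁻¹, Subgroup.Normal.conj_mem ‹_› a ha g, ?_⟩
    rw [map_mul, map_mul]
    rfl
  exact hle hx

instance [A.Normal] : MulSemiringAction G (envelopingAlgebra ρ A) where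
  smul g x := ⟨_, conj_smul_mem_envelopingAlgebra g x.2⟩
  one_smul x := Subtype.ext (by
    change ConjAct.toConjAct (ρ.asGroupHom 1) • (x : Module.End k V) = x
    rw [map_one, map_one, one_smul])
  mul_smul g h x := Subtype.ext (by
    change ConjAct.toConjAct (ρ.asGroupHom (g * h)) • (x : Module.End k V) = _
    rw [map_mul, map_mul, mul_smul]; rfl)
  smul_zero g := Subtype.ext (smul_zero (ConjAct.toConjAct (ρ.asGroupHom g)))
  smul_add g x y := Subtype.ext (smul_add _ (x : Module.End k V) y)
  smul_one g := Subtype.ext (smul_one (ConjAct.toConjAct (ρ.asGroupHom g)))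
  smul_mul g x y := Subtype.ext (smul_mul' _ (x : Module.End k V) y)

instance [A.Normal] : SMulCommClass G k (envelopingAlgebra ρ A) :=
  ⟨fun g c x => Subtype.ext (smul_comm (ConjAct.toConjAct (ρ.asGroupHom g)) c (x : Module.End k V))⟩

theorem isSemilinearRep_envelopingAlgebra [A.Normal] [IsMulCommutative A] :
    IsSemilinearRep (envelopingAlgebra ρ A) ρ := by
  intro g x v
  change _ = ρ g ((x : Module.End k V) (ρ g⁻¹ (ρ g v)))
  rw [ρ.inv_self_apply]
  rfl

instance [Finite V] : Finite (envelopingAlgebra ρ A) :=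
  have : Finite (Module.End k V) := DFunLike.finite _
  inferInstance

/-- The action of `A` on `V`, as a homomorphism into the enveloping algebra. -/
def toEnvelopingAlgebra (ρ : Representation k G V) (A : Subgroup G) : A →* envelopingAlgebra ρ A :=
  (ρ.comp A.subtype).codRestrict _ fun a => Algebra.subset_adjoin ⟨a, a.2, rfl⟩

theorem toEnvelopingAlgebra_injective (hfaith : Function.Injective ρ) :
    Function.Injective (toEnvelopingAlgebra ρ A) := fun _ _ h =>
  Subtype.ext (hfaith (congrArg Subtype.val h))

theorem isCyclic_of_isField_envelopingAlgebra [IsMulCommutative A] [Finite A]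
    (hfaith : Function.Injective ρ) (hE : IsField (envelopingAlgebra ρ A)) : IsCyclic A :=
  have := hE.isDomain
  isCyclic_of_injective_ringHom (toEnvelopingAlgebra ρ A) (toEnvelopingAlgebra_injective hfaith)

theorem orderOf_dvd_natCard_sub_one_of_isField_envelopingAlgebra [IsMulCommutative A] [Finite V]
    (hfaith : Function.Injective ρ) (hE : IsField (envelopingAlgebra ρ A)) {a : G} (ha : a ∈ A) :
    orderOf a ∣ Nat.card V - 1 := by
  have := hE.nontrivial
  rw [← Subgroup.orderOf_mk a ha, ← orderOf_injective _ (toEnvelopingAlgebra_injective hfaith)]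
  exact orderOf_dvd_natCard_sub_one_of_isField hE
    ((Group.isUnit (⟨a, ha⟩ : A)).map (toEnvelopingAlgebra ρ A)).ne_zero

theorem ker_toAlgAut_le_centralizer [A.Normal] [IsMulCommutative A]
    (hfaith : Function.Injective ρ) :
    (MulSemiringAction.toAlgAut G k (envelopingAlgebra ρ A)).ker ≤
      Subgroup.centralizer (A : Set G) := by
  intro g hg
  refine Subgroup.mem_centralizer_iff.2 fun a ha => hfaith (LinearMap.ext fun v => ?_)
  have hfix : g • toEnvelopingAlgebra ρ A ⟨a, ha⟩ = toEnvelopingAlgebra ρ A ⟨a, ha⟩ :=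
    DFunLike.congr_fun (MonoidHom.mem_ker.1 hg) _
  have hsemi := isSemilinearRep_envelopingAlgebra g (toEnvelopingAlgebra ρ A ⟨a, ha⟩) v
  rw [hfix] at hsemi
  rw [map_mul, map_mul]
  exact hsemi.symm

theorem powCommutator_iterate_top_eq_bot_of_isField {p : ℕ} (hp : p.Prime) (hG : IsPGroup p G)
    [Finite k] [FiniteDimensional k V] [Nontrivial V] (hfaith : Function.Injective ρ) [A.Normal]
    [IsMulCommutative A] (hA : Subgroup.centralizer (A : Set G) = A)
    (hE : IsField (envelopingAlgebra ρ A)) :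
    (powCommutator p)^[(Module.finrank k V).factorization p + Nat.log p (Nat.card k ^ p)]
      (⊤ : Subgroup G) = ⊥ := by
  have : Finite V := Module.finite_of_finite k
  have : Finite (Module.End k V) := DFunLike.finite _
  have : Finite G := Finite.of_injective ρ hfaith
  have : Fact p.Prime := ⟨hp⟩
  have := isCyclic_algEquiv_of_isField (k := k) hE
  have := isCyclic_of_isField_envelopingAlgebra hfaith hE
  obtain ⟨a, rfl⟩ := (Subgroup.isCyclic_iff_exists_zpowers_eq_top A).1 this
  obtain ⟨b, hab⟩ := exists_closure_pair_eq_top _ ((ker_toAlgAut_le_centralizer hfaith).trans hA.le)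
  obtain ⟨m, hm⟩ := IsPGroup.iff_orderOf.1 hG a
  have hdvd := orderOf_dvd_natCard_sub_one_of_isField_envelopingAlgebra hfaith hE
    (Subgroup.mem_zpowers a)
  rw [hm, Module.natCard_eq_pow_finrank (K := k)] at hdvd
  have hle := le_factorization_add_log_of_pow_dvd_pow_sub_one hp Finite.one_lt_card
    Module.finrank_pos.ne' hdvd
  rw [eq_bot_iff, ← powCommutator_iterate_top_eq_bot hp hG hA.le hab hm]
  exact powCommutator_iterate_antitone hle ⊤

end EnvelopingAlgebra

section FrattiniLength

variable {k G V : Type*} [Field k] [Group G] [AddCommGroup V] [Module k V]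
  {ρ : Representation k G V} {p : ℕ}

/-- The faithful representation of `G ⧸ ker ρ` induced by `ρ`. -/
def kerLiftRep (ρ : Representation k G V) : Representation k (G ⧸ MonoidHom.ker ρ) V :=
  QuotientGroup.lift _ ρ le_rfl

theorem kerLiftRep_injective (ρ : Representation k G V) : Function.Injective (kerLiftRep ρ) := by
  rw [← MonoidHom.ker_eq_bot_iff, kerLiftRep, QuotientGroup.ker_lift,
    QuotientGroup.map_mk'_self]

theorem isIrreducibleRep_kerLiftRep (hρ : ρ.IsIrreducibleRep) :
    (kerLiftRep ρ).IsIrreducibleRep :=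
  ⟨hρ.1, fun W hW => hρ.2 W fun g => hW (g : G ⧸ MonoidHom.ker ρ)⟩

theorem powCommutator_iterate_top_eq_bot_or_exists_isImprimitivityBlock (hp : p.Prime)
    (hG : IsPGroup p G) [Finite k] [FiniteDimensional k V] (hfaith : Function.Injective ρ)
    (hρ : ρ.IsIrreducibleRep) :
    (powCommutator p)^[(Module.finrank k V).factorization p + Nat.log p (Nat.card k ^ p)]
        (⊤ : Subgroup G) = ⊥ ∨
      ∃ H : Subgroup G, H.Normal ∧ H.index = p ∧ ∃ U : Subrepresentation (ρ.comp H.subtype),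
        IsImprimitivityBlock U ∧ U.toSubmodule ≠ ⊥ := by
  have : Fact p.Prime := ⟨hp⟩
  have : Finite V := Module.finite_of_finite k
  have : Finite (Module.End k V) := DFunLike.finite _
  have : Finite G := Finite.of_injective ρ hfaith
  have : Nontrivial V := hρ.1
  have := hG.isNilpotent
  obtain ⟨A, hnormal, hself⟩ := exists_normal_centralizer_eq_self (G := G)
  have : IsMulCommutative A := Subgroup.le_centralizer_iff_isMulCommutative.1 hself.ge
  exact (isField_or_exists_isImprimitivityBlock hp hG hρ
    (isSemilinearRep_envelopingAlgebra (A := A))).imp_left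
    (powCommutator_iterate_top_eq_bot_of_isField hp hG hfaith hself)

theorem powCommutator_iterate_succ_top_le_ker (hp : p.Prime) (hρ : ρ.IsIrreducibleRep)
    {H : Subgroup G} [H.Normal] (hindex : H.index = p) {U : Subrepresentation (ρ.comp H.subtype)}
    (hU : U.toSubmodule ≠ ⊥) {n : ℕ}
    (hn : (powCommutator p)^[n] ⊤ ≤ MonoidHom.ker U.toRepresentation) :
    (powCommutator p)^[n + 1] ⊤ ≤ MonoidHom.ker ρ := by
  have hmap := map_powCommutator_iterate (p := p) H.subtype n ⊤
  rw [← MonoidHom.range_eq_map, Subgroup.range_subtype] at hmap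
  have : ((powCommutator p)^[n] H).Normal := powCommutator_iterate_normal n
  have hfixed : U.toSubmodule ≤
      Representation.invariants (ρ.comp ((powCommutator p)^[n] H).subtype) := by
    rintro u hu ⟨x, hx⟩
    obtain ⟨y, hy, rfl⟩ := hmap.ge hx
    exact congrArg Subtype.val (LinearMap.congr_fun (hn hy) ⟨u, hu⟩)
  calc (powCommutator p)^[n + 1] ⊤ = (powCommutator p)^[n] (powCommutator p ⊤) := rfl
    _ ≤ (powCommutator p)^[n] H :=
        powCommutator_mono.iterate n (powCommutator_top_le_of_index_eq hp hindex)
    _ ≤ MonoidHom.ker ρ := le_ker_of_invariants_ne_bot hρ (ne_bot_of_le_ne_bot hU hfixed)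

theorem powCommutator_iterate_top_le_ker (hp : p.Prime) (hG : IsPGroup p G) [Finite k]
    [FiniteDimensional k V] (hρ : ρ.IsIrreducibleRep) :
    (powCommutator p)^[(Module.finrank k V).factorization p + Nat.log p (Nat.card k ^ p)] ⊤ ≤
      MonoidHom.ker ρ := by
  induction hd : Module.finrank k V using Nat.strong_induction_on generalizing G V with
  | _ d ih =>
  subst hd
  have hσ := isIrreducibleRep_kerLiftRep hρ
  have hQ := hG.to_quotient (MonoidHom.ker ρ)
  have hfaith := kerLiftRep_injective ρ
  refine powCommutator_iterate_top_le_of_quotient ?_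
  rcases powCommutator_iterate_top_eq_bot_or_exists_isImprimitivityBlock hp hQ hfaith hσ with
    hbot | ⟨H, hnormal, hindex, U, hblock, hU⟩
  · exact hbot
  have : H.FiniteIndex := ⟨hindex ▸ hp.ne_zero⟩
  have : Nontrivial U.toSubmodule := Submodule.nontrivial_iff_ne_bot.2 hU
  have hpos : 0 < Module.finrank k U.toSubmodule := Module.finrank_pos
  have hfinrank := index_mul_finrank_eq hσ hblock hU
  rw [hindex] at hfinrank
  have hU_ker := ih _ (hfinrank ▸ lt_mul_of_one_lt_left hpos hp.one_lt) (hQ.to_subgroup H)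
    (isIrreducibleRep_toRepresentation hσ hblock hU) rfl
  have hker := powCommutator_iterate_succ_top_le_ker hp hσ hindex hU hU_ker
  rw [← hfinrank, Nat.factorization_mul hp.ne_zero hpos.ne', Finsupp.add_apply,
    hp.factorization_self, add_assoc, add_comm 1]
  exact eq_bot_iff.2 (hker.trans_eq ((MonoidHom.ker_eq_bot_iff _).2 hfaith))

theorem frattiniLength_le_of_faithful_irreducible_finiteField_general (hp : p.Prime)
    (hG : IsPGroup p G) [Finite k] [FiniteDimensional k V] (hfaith : Function.Injective ρ)
    (hρ : ρ.IsIrreducibleRep) :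
    (frattiniLength G : ℝ) ≤
      ((Module.finrank k V).factorization p : ℝ) + p * Real.logb p (Nat.card k) := by
  let n := (Module.finrank k V).factorization p + Nat.log p (Nat.card k ^ p)
  have hbot : frattiniSeries G n = ⊥ := by
    rw [eq_bot_iff, ← (MonoidHom.ker_eq_bot_iff ρ).2 hfaith]
    exact (frattiniSeries_le_powCommutator_iterate hp n).trans
      (powCommutator_iterate_top_le_ker hp hG hρ)
  calc (frattiniLength G : ℝ) ≤ n := Nat.cast_le.2 (Nat.sInf_le hbot)
    _ = (Module.finrank k V).factorization p + (Nat.log p (Nat.card k ^ p) : ℝ) :=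
        Nat.cast_add _ _
    _ ≤ (Module.finrank k V).factorization p + p * Real.logb p (Nat.card k) := by
        rw [← Real.logb_pow, ← Nat.cast_pow]
        gcongr
        exact Real.natLog_le_logb _ _

end FrattiniLength

/-- If a finite `p`-group `G` has a faithful irreducible representation on an
`N`-dimensional vector space over a finite field `k` with `q` elements and
`char k ≠ p`, then `𝓕(G) ≤ ν_p(N) + p · log_p q` (as real numbers). -/
theorem frattiniLength_le_of_faithful_irreducible_finiteField (p : ℕ) (hp : p.Prime)
    (k : Type*) [Field k] [Fintype k] (q : ℕ) (hq : Fintype.card k = q)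
    (hchar : ringChar k ≠ p)
    (G : Type*) [Group G] [Finite G] (hG : IsPGroup p G)
    (V : Type*) [AddCommGroup V] [Module k V] [FiniteDimensional k V]
    (ρ : Representation k G V) (hfaith : Function.Injective ρ)
    (hirr : ρ.IsIrreducibleRep)
    (N : ℕ) (hN1 : 1 ≤ N) (hN : Module.finrank k V = N) :
    (frattiniLength G : ℝ) ≤ (N.factorization p : ℝ) + p * Real.logb p q := by
  subst hq hN
  rw [← Nat.card_eq_fintype_card]
  exact frattiniLength_le_of_faithful_irreducible_finiteField_general hp hG hfaith hirr
end

section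
/- Let p be a prime, K an algebraically closed field, d ≥ 1, and let x_1, …, x_m ∈ (K^×)^d and E_1, …, E_m be subgroups of the group (K^×)^d. For j ∈ ℕ let a_j = |μ(p^j)^d ∩ ⋃_{i=1}^m x_i E_i| (a natural number, since μ(p^j)^d is finite). Then there exists an integer z ∈ ℤ such that the sequence (a_j), viewed in the p-adic integers ℤ_p, converges to z as j → ∞. -/
open Filter Pointwise

/-!
A nonempty intersection of cosets `xᵢEᵢ` is a coset of `⨅ Eᵢ`, so inclusion–exclusion expresses the
count as an integer combination of the counts for single cosets. If `T j` is an increasing family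
of finite `p`-subgroups and `gE` is a coset with `g ∈ T j₀`, then `T j ∩ gE = g(T j ∩ E)` for
`j ≥ j₀` has cardinality a power of `p` whose exponent increases with `j`: either the exponent is
eventually constant, or the cardinality tends to `0` in `ℤ_[p]`.
-/

open scoped Topology

section InclusionExclusion

variable {α ι : Type*} {T : Set α}

lemma ncard_inter_eq_sum_indicator (hT : T.Finite) (A : Set α) :
    ((T ∩ A).ncard : ℤ) = ∑ a ∈ hT.toFinset, A.indicator 1 a := by
  classical
  have hTA : T ∩ A = ↑(hT.toFinset.filter (· ∈ A)) := by
    ext; simp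
  rw [hTA, Set.ncard_coe_finset]
  simp [Set.indicator_apply]

lemma ncard_inter_biUnion_eq_sum_powerset (hT : T.Finite) (s : Finset ι) (S : ι → Set α) :
    ((T ∩ ⋃ i ∈ s, S i).ncard : ℤ) =
      ∑ t ∈ s.powerset with t.Nonempty, (-1) ^ (t.card + 1) * ((T ∩ ⋂ i ∈ t, S i).ncard : ℤ) := by
  simp only [ncard_inter_eq_sum_indicator hT, Finset.indicator_biUnion_eq_sum_powerset,
    Finset.mul_sum, smul_eq_mul]
  exact Finset.sum_comm

end InclusionExclusion

section Cosets

variable {G : Type*} [Group G]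

lemma smul_coe_eq_of_mem_smul {E : Subgroup G} {x g : G} (hg : g ∈ x • (E : Set G)) :
    x • (E : Set G) = g • (E : Set G) :=
  (leftCoset_eq_iff E).2 ((mem_leftCoset_iff x).1 hg)

lemma iInter_smul_coe_eq_smul_iInf {ι : Sort*} {x : ι → G} {E : ι → Subgroup G} {g : G}
    (hg : g ∈ ⋂ i, x i • (E i : Set G)) :
    ⋂ i, x i • (E i : Set G) = g • ((⨅ i, E i : Subgroup G) : Set G) := by
  rw [Subgroup.coe_iInf, Set.smul_set_iInter]
  exact Set.iInter_congr fun i ↦ smul_coe_eq_of_mem_smul (Set.mem_iInter.1 hg i)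

lemma ncard_inter_smul_coe_of_mem {H : Subgroup G} (E : Subgroup G) {g : G} (hg : g ∈ H) :
    ((H : Set G) ∩ g • (E : Set G)).ncard = Nat.card (H ⊓ E : Subgroup G) := by
  have hinter : (H : Set G) ∩ g • (E : Set G) = g • ((H ⊓ E : Subgroup G) : Set G) := by
    rw [Subgroup.coe_inf, Set.smul_set_inter, leftCoset_mem_leftCoset H hg]
  rw [hinter, Set.ncard_smul_set]
  rfl

end Cosets

section PadicLimits

variable {p : ℕ} [Fact p.Prime] {J : Type*} [Preorder J]

lemma exists_int_tendsto_prime_pow_of_monotone {n : J → ℕ} (hn : Monotone n) :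
    ∃ z : ℤ, Tendsto (fun j ↦ (p : ℤ_[p]) ^ n j) atTop (𝓝 (z : ℤ_[p])) := by
  rcases tendsto_atTop_of_monotone hn with htop | ⟨l, hl⟩
  · refine ⟨0, ?_⟩
    rw [Int.cast_zero]
    exact (tendsto_pow_atTop_nhds_zero_of_norm_lt_one
      (PadicInt.norm_lt_one_iff_dvd _ |>.2 dvd_rfl)).comp htop
  · refine ⟨(p : ℤ) ^ l, ?_⟩
    push_cast
    exact (continuous_of_discreteTopology.tendsto l).comp hl

variable {G : Type*} [Group G] {T : J → Subgroup G}

lemma exists_int_tendsto_natCard_of_isPGroup (hmono : Monotone T) (hfin : ∀ j, Finite (T j))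
    (hT : ∀ j, IsPGroup p (T j)) :
    ∃ z : ℤ, Tendsto (fun j ↦ (Nat.card (T j) : ℤ_[p])) atTop (𝓝 (z : ℤ_[p])) := by
  choose n hn using fun j ↦ IsPGroup.iff_card.1 (hT j)
  have hn_mono : Monotone n := fun i j hij ↦ by
    have hcard : Nat.card (T i) ≤ Nat.card (T j) := Subgroup.card_le_of_le (hmono hij)
    rwa [hn, hn, Nat.pow_le_pow_iff_right (Fact.out : p.Prime).one_lt] at hcard
  simpa only [hn, Nat.cast_pow] using exists_int_tendsto_prime_pow_of_monotone (p := p) hn_mono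

lemma exists_int_tendsto_ncard_inter_smul_coe (hmono : Monotone T) (hfin : ∀ j, Finite (T j))
    (hT : ∀ j, IsPGroup p (T j)) (x : G) (E : Subgroup G) :
    ∃ z : ℤ, Tendsto (fun j ↦ (((T j : Set G) ∩ x • (E : Set G)).ncard : ℤ_[p])) atTop
      (𝓝 (z : ℤ_[p])) := by
  by_cases hempty : ∀ j, (T j : Set G) ∩ x • (E : Set G) = ∅
  · exact ⟨0, by simp [hempty, tendsto_const_nhds]⟩
  · push Not at hempty
    obtain ⟨j₀, g, hgT, hgE⟩ := hempty
    obtain ⟨z, hz⟩ := exists_int_tendsto_natCard_of_isPGroup (T := fun j ↦ T j ⊓ E)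
      (fun _ _ hij ↦ inf_le_inf_right E (hmono hij))
      (fun j ↦ Finite.of_injective _ (Subgroup.inclusion_injective (inf_le_left (a := T j))))
      (fun j ↦ (hT j).to_inf_left)
    refine ⟨z, hz.congr' ?_⟩
    filter_upwards [eventually_ge_atTop j₀] with j hj
    rw [smul_coe_eq_of_mem_smul hgE, ncard_inter_smul_coe_of_mem E (hmono hj hgT)]

lemma exists_int_tendsto_ncard_inter_iInter_smul_coe (hmono : Monotone T)
    (hfin : ∀ j, Finite (T j)) (hT : ∀ j, IsPGroup p (T j)) {ι : Sort*} (x : ι → G)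
    (E : ι → Subgroup G) :
    ∃ z : ℤ, Tendsto (fun j ↦ (((T j : Set G) ∩ ⋂ i, x i • (E i : Set G)).ncard : ℤ_[p])) atTop
      (𝓝 (z : ℤ_[p])) := by
  rcases (⋂ i, x i • (E i : Set G)).eq_empty_or_nonempty with hempty | ⟨g, hg⟩
  · exact ⟨0, by simp [hempty, tendsto_const_nhds]⟩
  · rw [iInter_smul_coe_eq_smul_iInf hg]
    exact exists_int_tendsto_ncard_inter_smul_coe hmono hfin hT g _

theorem padic_limit_count_roots_of_unity_in_cosets_general (hmono : Monotone T)
    (hfin : ∀ j, Finite (T j)) (hT : ∀ j, IsPGroup p (T j)) {ι : Type*} [Finite ι] (x : ι → G)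
    (E : ι → Subgroup G) :
    ∃ z : ℤ, Tendsto (fun j ↦ (((T j : Set G) ∩ ⋃ i, x i • (E i : Set G)).ncard : ℤ_[p])) atTop
      (𝓝 (z : ℤ_[p])) := by
  have := Fintype.ofFinite ι
  choose z hz using fun t : Finset ι ↦
    exists_int_tendsto_ncard_inter_iInter_smul_coe hmono hfin hT (fun i : t ↦ x i) (fun i : t ↦ E i)
  have hcount (j : J) : (((T j : Set G) ∩ ⋃ i, x i • (E i : Set G)).ncard : ℤ_[p]) =
      ∑ t : Finset ι with t.Nonempty,
        (-1) ^ (t.card + 1) * (((T j : Set G) ∩ ⋂ i : t, x i • (E i : Set G)).ncard : ℤ_[p]) := by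
    have hincl_excl := ncard_inter_biUnion_eq_sum_powerset (T j : Set G).toFinite Finset.univ
      fun i ↦ x i • (E i : Set G)
    simp only [Finset.mem_univ, Set.iUnion_true, Finset.powerset_univ] at hincl_excl
    simp only [Set.iInter_subtype]
    exact_mod_cast congrArg (Int.cast : ℤ → ℤ_[p]) hincl_excl
  refine ⟨∑ t : Finset ι with t.Nonempty, (-1) ^ (t.card + 1) * z t, ?_⟩
  simp only [hcount]
  push_cast
  exact tendsto_finsetSum _ fun t _ ↦ (hz t).const_mul _

end PadicLimits

section RootsOfUnity

/-- The group `μ(n)^ι` of families indexed by `ι` of `n`-th roots of unity, as a subgroup of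
`ι → Mˣ`; for `n = p ^ j` these are the increasing finite `p`-subgroups of the counting problem. -/
def piRootsOfUnity (n : ℕ) (ι M : Type*) [CommMonoid M] : Subgroup (ι → Mˣ) :=
  Subgroup.pi Set.univ fun _ ↦ rootsOfUnity n M

variable {ι M : Type*}

lemma coe_piRootsOfUnity [CommMonoid M] (n : ℕ) :
    (piRootsOfUnity n ι M : Set (ι → Mˣ)) = {ζ | ∀ i, ζ i ^ n = 1} := by
  ext; simp [piRootsOfUnity, Subgroup.mem_pi]

lemma piRootsOfUnity_le_of_dvd [CommMonoid M] {k l : ℕ} (hkl : k ∣ l) :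
    piRootsOfUnity k ι M ≤ piRootsOfUnity l ι M :=
  fun _ hζ i hi ↦ rootsOfUnity_le_of_dvd hkl (hζ i hi)

lemma monotone_piRootsOfUnity_pow [CommMonoid M] (n : ℕ) :
    Monotone fun j ↦ piRootsOfUnity (n ^ j) ι M :=
  fun _ _ hij ↦ piRootsOfUnity_le_of_dvd (pow_dvd_pow n hij)

lemma isPGroup_piRootsOfUnity [CommMonoid M] (p j : ℕ) :
    IsPGroup p (piRootsOfUnity (p ^ j) ι M) :=
  fun ζ ↦ ⟨j, Subtype.ext (funext fun i ↦ ζ.2 i (Set.mem_univ i))⟩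

lemma finite_piRootsOfUnity [Finite ι] [CommRing M] [IsDomain M] (n : ℕ) [NeZero n] :
    Finite (piRootsOfUnity n ι M) :=
  have hroots : (rootsOfUnity n M : Set Mˣ).Finite :=
    Set.finite_coe_iff.1 (inferInstanceAs (Finite (rootsOfUnity n M)))
  (Set.Finite.pi fun _ : ι ↦ hroots).to_subtype

end RootsOfUnity

/-- Let `K` be an algebraically closed field, `d ≥ 1`, `x₁, …, x_m ∈ (Kˣ)^d` and
`E₁, …, E_m` subgroups of `(Kˣ)^d`.  The number `a j` of points of `μ(p^j)^d` lying
in `⋃ᵢ xᵢEᵢ` converges `p`-adically to an integer as `j → ∞`. -/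
theorem padic_limit_count_roots_of_unity_in_cosets (p : ℕ) (hp : Fact p.Prime)
    (K : Type*) [Field K] [IsAlgClosed K] (d : ℕ) (hd : 1 ≤ d) (m : ℕ)
    (x : Fin m → (Fin d → Kˣ)) (E : Fin m → Subgroup (Fin d → Kˣ))
    (a : ℕ → ℕ)
    (ha : ∀ j, a j =
      ({ζ : Fin d → Kˣ | ∀ t, ζ t ^ (p ^ j) = 1} ∩
        ⋃ i, x i • (E i : Set (Fin d → Kˣ))).ncard) :
    ∃ z : ℤ, Tendsto (fun j => (a j : ℤ_[p])) atTop (nhds ((z : ℤ_[p]))) := by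
  simpa only [ha, coe_piRootsOfUnity] using padic_limit_count_roots_of_unity_in_cosets_general
    (monotone_piRootsOfUnity_pow p) (fun _ ↦ finite_piRootsOfUnity _) (isPGroup_piRootsOfUnity p)
    x E
end

section
/- Let p be a prime, K an algebraically closed field, d ≥ 1. Let V ⊆ (K^×)^d be a Zariski closed subset, i.e. V = {x ∈ (K^×)^d : f(x) = 0 for all f ∈ S} for some set S of polynomials in d variables over K, and let E ⊆ (K^×)^d be a subgroup. For j ∈ ℕ let a_j = |μ(p^j)^d ∩ V ∩ E| (a natural number). Then there exists an integer z ∈ ℤ such that the sequence (a_j), viewed in the p-adic integers ℤ_p, converges to z as j → ∞. -/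
open Filter

/-!
Let `A` be the group of elements of `p`-power order of `E`. The claim is that the number of points
of `V ∩ A` killed by `p ^ j` converges, and the key is that `V ∩ A` is a finite union of cosets of
subgroups of `A`. Once `j` is large, a coset of `H` has as many points of order dividing
`p ^ j` as `H`; this number is eventually constant if the orders in `H` are bounded and divisible by
`p ^ j` otherwise, and inclusion-exclusion handles unions.

For the key fact, Galois theory over the prime field provides, for every large `s`, automorphisms
which fix the equations of a closed set `Z` and act on a given `x ∈ Z ∩ A` as
`x ↦ x ^ (1 + p ^ s * w)` with `w` prime to `p`. Let `H` be the stabiliser of `Z` in `A`. If the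
order of `x` modulo `H` is large, then choosing `s` so that `p ^ (s + 1)` is this order gives
`ε * x ∈ Z` for some `ε` of order `p` modulo `H`. So `Z` is covered by finitely many cosets of `H`
and finitely many sets `Z ∩ ε⁻¹ Z` with `ε ∉ H`; these are proper closed subsets of `Z`, and
Noetherian induction applies.
-/

open scoped Topology Pointwise

section PowTorsion

/-- The subgroup `A[n]` of elements of a commutative group `A` killed by `n`. -/
def powTorsion (A : Type*) [CommGroup A] (n : ℕ) : Subgroup A :=
  (powMonoidHom n).ker

variable {A B : Type*} [CommGroup A] [CommGroup B] {n : ℕ}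

@[simp]
theorem mem_powTorsion {x : A} : x ∈ powTorsion A n ↔ x ^ n = 1 :=
  Iff.rfl

theorem map_mem_powTorsion (f : A →* B) {x : A} (hx : x ∈ powTorsion A n) :
    f x ∈ powTorsion B n := by
  rw [mem_powTorsion] at hx ⊢
  rw [← map_pow, hx, map_one]

theorem finite_powTorsion_of_injective {f : A →* B} (hf : Function.Injective f)
    [Finite (powTorsion B n)] : Finite (powTorsion A n) :=
  .of_injective _ (Subtype.map_injective (fun _ => map_mem_powTorsion f) hf)

theorem card_powTorsion_le_of_injective {f : A →* B} (hf : Function.Injective f)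
    [Finite (powTorsion B n)] : Nat.card (powTorsion A n) ≤ Nat.card (powTorsion B n) :=
  Nat.card_le_card_of_injective _ (Subtype.map_injective (fun _ => map_mem_powTorsion f) hf)

theorem card_powTorsion_le_of_surjective [Finite A] {f : A →* B} (hf : Function.Surjective f) :
    Nat.card (powTorsion B n) ≤ Nat.card (powTorsion A n) := by
  have : Finite B := .of_surjective f hf
  have hrange : (powMonoidHom n : A →* A).range.map f = (powMonoidHom n : B →* B).range := by
    ext y
    simp [hf.exists, ← map_pow]
  rw [powTorsion, powTorsion, ← Subgroup.index_range, ← Subgroup.index_range, ← hrange]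
  exact Nat.le_of_dvd (Nat.pos_of_ne_zero Subgroup.index_ne_zero_of_finite)
    (Subgroup.index_map_dvd _ hf)

theorem finite_powTorsion_quotient (hA : IsMulTorsion A) [Finite (powTorsion A n)]
    (H : Subgroup A) : Finite (powTorsion (A ⧸ H) n) := by
  by_contra hinf
  obtain ⟨s, hs, hcard⟩ :=
    Set.Infinite.exists_subset_card_eq hinf (Nat.card (powTorsion A n) + 1)
  let B : Subgroup A := .closure ((Quotient.out : A ⧸ H → A) '' s)
  have : Finite B := by
    have : Group.FG B := (Group.fg_iff_subgroup_fg B).2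
      ((Subgroup.fg_iff B).2 ⟨_, rfl, s.finite_toSet.image _⟩)
    exact CommGroup.finite_of_fg_isMulTorsion B (hA.subgroup B)
  let C : Subgroup (A ⧸ H) := B.map (QuotientGroup.mk' H)
  have hsC : ∀ b ∈ s, b ∈ C := fun b hb =>
    ⟨b.out, Subgroup.subset_closure ⟨b, hb, rfl⟩, QuotientGroup.out_eq' b⟩
  have : Finite C := .of_surjective _ ((QuotientGroup.mk' H).subgroupMap_surjective B)
  have hle : s.card ≤ Nat.card (powTorsion A n) :=
    calc s.card = Nat.card s := (Nat.card_eq_finsetCard s).symm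
      _ ≤ Nat.card (powTorsion C n) :=
        Nat.card_le_card_of_injective
          (fun b => ⟨⟨b, hsC b b.2⟩, Subtype.ext (hs b.2)⟩)
          fun _ _ h => Subtype.ext (congrArg (fun c : powTorsion C n => ((c : C) : A ⧸ H)) h)
      _ ≤ Nat.card (powTorsion B n) :=
        card_powTorsion_le_of_surjective ((QuotientGroup.mk' H).subgroupMap_surjective B)
      _ ≤ Nat.card (powTorsion A n) :=
        card_powTorsion_le_of_injective B.subtype_injective
  lia

end PowTorsion

section Cosets

variable {A : Type*} [CommGroup A]

/-- A set is a coset of a subgroup or empty; the Mal'cev closure property characterises these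
sets and is visibly stable under intersection. -/
def IsCosetOrEmpty (C : Set A) : Prop :=
  ∀ x ∈ C, ∀ y ∈ C, ∀ z ∈ C, x * y⁻¹ * z ∈ C

theorem IsCosetOrEmpty.inter {C D : Set A} (hC : IsCosetOrEmpty C) (hD : IsCosetOrEmpty D) :
    IsCosetOrEmpty (C ∩ D) :=
  fun x hx y hy z hz => ⟨hC x hx.1 y hy.1 z hz.1, hD x hx.2 y hy.2 z hz.2⟩

theorem isCosetOrEmpty_univ : IsCosetOrEmpty (Set.univ : Set A) :=
  fun _ _ _ _ _ _ => trivial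

theorem IsCosetOrEmpty.exists_eq_smul {C : Set A} (hC : IsCosetOrEmpty C) {x : A} (hx : x ∈ C) :
    ∃ H : Subgroup A, C = x • (H : Set A) := by
  refine ⟨{ carrier := {h | x * h ∈ C}
            one_mem' := by simpa using hx
            mul_mem' := fun {h k} hh hk => by
              have := hC _ hh x hx _ hk
              rwa [show x * h * x⁻¹ * (x * k) = x * (h * k) by group] at this
            inv_mem' := fun {h} hh => by
              have := hC x hx _ hh x hx
              rwa [mul_inv, mul_inv_cancel_left, mul_comm] at this }, ?_⟩
  ext y
  simp [Set.mem_smul_set_iff_inv_smul_mem]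

/-- A finite union of cosets of possibly different subgroups. -/
def IsFiniteUnionOfCosets (Y : Set A) : Prop :=
  ∃ 𝒞 : Set (Set A), 𝒞.Finite ∧ (∀ C ∈ 𝒞, IsCosetOrEmpty C) ∧ ⋃₀ 𝒞 = Y

theorem IsCosetOrEmpty.isFiniteUnionOfCosets {C : Set A} (hC : IsCosetOrEmpty C) :
    IsFiniteUnionOfCosets C :=
  ⟨{C}, Set.finite_singleton C, by simpa using hC, Set.sUnion_singleton C⟩

theorem IsFiniteUnionOfCosets.iUnion {ι : Type*} [Finite ι] {Y : ι → Set A}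
    (hY : ∀ i, IsFiniteUnionOfCosets (Y i)) : IsFiniteUnionOfCosets (⋃ i, Y i) := by
  choose 𝒞 hfin hcoset hunion using hY
  refine ⟨⋃ i, 𝒞 i, Set.finite_iUnion hfin, fun C hC => ?_, ?_⟩
  · obtain ⟨i, hi⟩ := Set.mem_iUnion.1 hC
    exact hcoset i C hi
  · simp only [Set.sUnion_iUnion, hunion]

theorem IsFiniteUnionOfCosets.union {Y Z : Set A} (hY : IsFiniteUnionOfCosets Y)
    (hZ : IsFiniteUnionOfCosets Z) : IsFiniteUnionOfCosets (Y ∪ Z) := by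
  rw [Set.union_eq_iUnion]
  exact .iUnion (Bool.forall_bool.2 ⟨hZ, hY⟩)

end Cosets

section PadicCounting

variable {A : Type*} [CommGroup A] {p : ℕ} [Fact p.Prime]

/-- The number of elements of `Y` killed by `p ^ j` converges `p`-adically to an integer as
`j → ∞`. -/
def PowTorsionCountConverges (p : ℕ) [Fact p.Prime] (Y : Set A) : Prop :=
  ∃ z : ℤ, Tendsto (fun j => (((powTorsion A (p ^ j) : Set A) ∩ Y).ncard : ℤ_[p])) atTop
    (𝓝 (z : ℤ_[p]))

theorem powTorsion_pow_mono (p : ℕ) : Monotone fun j => powTorsion A (p ^ j) :=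
  fun _ _ hij _ hx =>
    orderOf_dvd_iff_pow_eq_one.1 ((orderOf_dvd_of_pow_eq_one hx).trans (pow_dvd_pow p hij))

theorem pow_dvd_card_powTorsion {j : ℕ} {x : A} {n : ℕ} (hx : x ^ p ^ n = 1)
    (hxj : x ^ p ^ j ≠ 1) (H : Subgroup A) (hxH : x ∈ H) :
    p ^ j ∣ Nat.card (powTorsion A (p ^ j) ⊓ H : Subgroup A) := by
  obtain ⟨k, hk⟩ := exists_orderOf_eq_prime_pow_iff.2 ⟨n, hx⟩
  have hjk : j ≤ k := by
    by_contra! h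
    exact hxj (orderOf_dvd_iff_pow_eq_one.1 (hk ▸ pow_dvd_pow p h.le))
  have horder : orderOf (x ^ p ^ (k - j)) = p ^ j := by
    rw [orderOf_pow_of_dvd (NeZero.ne _) (hk ▸ pow_dvd_pow p (Nat.sub_le k j)), hk,
      Nat.pow_div (Nat.sub_le k j) (Nat.Prime.pos Fact.out), Nat.sub_sub_self hjk]
  have hmem : x ^ p ^ (k - j) ∈ powTorsion A (p ^ j) ⊓ H :=
    ⟨horder ▸ pow_orderOf_eq_one _, H.pow_mem hxH _⟩
  calc p ^ j = orderOf (x ^ p ^ (k - j)) := horder.symm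
    _ ∣ _ := Subgroup.orderOf_dvd_natCard _ hmem

theorem powTorsionCountConverges_subgroup (H : Subgroup A) :
    PowTorsionCountConverges p (H : Set A) := by
  by_cases hexp : ∃ j, ∀ x ∈ H, ∀ n, x ^ p ^ n = 1 → x ^ p ^ j = 1
  · obtain ⟨j, hj⟩ := hexp
    refine ⟨((powTorsion A (p ^ j) : Set A) ∩ H).ncard, tendsto_const_nhds.congr' ?_⟩
    filter_upwards [eventually_ge_atTop j] with i hi
    have hstable : (powTorsion A (p ^ j) : Set A) ∩ H = (powTorsion A (p ^ i) : Set A) ∩ H :=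
      Set.Subset.antisymm (Set.inter_subset_inter_left _ (powTorsion_pow_mono p hi))
        fun x hx => ⟨hj x hx.2 i hx.1, hx.2⟩
    rw [hstable, Int.cast_natCast]
  · push Not at hexp
    refine ⟨0, ?_⟩
    rw [Int.cast_zero]
    have hp : ‖(p : ℤ_[p])‖ < 1 := PadicInt.mem_nonunits.1 PadicInt.p_nonunit
    refine squeeze_zero_norm (fun j => ?_)
      (tendsto_pow_atTop_nhds_zero_of_lt_one (norm_nonneg (p : ℤ_[p])) hp)
    obtain ⟨x, hxH, n, hx, hxj⟩ := hexp j
    obtain ⟨c, hc⟩ := pow_dvd_card_powTorsion hx hxj H hxH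
    calc ‖(((powTorsion A (p ^ j) : Set A) ∩ H).ncard : ℤ_[p])‖
        = ‖((p ^ j * c : ℕ) : ℤ_[p])‖ := by rw [← hc]; rfl
      _ = ‖(p : ℤ_[p])‖ ^ j * ‖(c : ℤ_[p])‖ := by simp
      _ ≤ ‖(p : ℤ_[p])‖ ^ j := mul_le_of_le_one_right (by positivity) (PadicInt.norm_le_one _)

theorem PowTorsionCountConverges.smul (hA : IsPGroup p A) {Y : Set A}
    (hY : PowTorsionCountConverges p Y) (x : A) : PowTorsionCountConverges p (x • Y) := by
  obtain ⟨z, hz⟩ := hY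
  obtain ⟨n, hn⟩ := hA x
  refine ⟨z, hz.congr' ?_⟩
  filter_upwards [eventually_ge_atTop n] with j hj
  have hx : x ∈ powTorsion A (p ^ j) := powTorsion_pow_mono p hj hn
  have hinter : (powTorsion A (p ^ j) : Set A) ∩ x • Y =
      x • ((powTorsion A (p ^ j) : Set A) ∩ Y) := by
    rw [Set.smul_set_inter, smul_coe_set hx]
  rw [hinter, Set.ncard_smul_set]

theorem IsCosetOrEmpty.powTorsionCountConverges (hA : IsPGroup p A) {C : Set A}
    (hC : IsCosetOrEmpty C) : PowTorsionCountConverges p C := by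
  obtain rfl | ⟨x, hx⟩ := C.eq_empty_or_nonempty
  · exact ⟨0, by simp⟩
  · obtain ⟨H, rfl⟩ := hC.exists_eq_smul hx
    exact (powTorsionCountConverges_subgroup H).smul hA x

theorem PowTorsionCountConverges.union [∀ n, Finite (powTorsion A (p ^ n))] {Y Z : Set A}
    (hY : PowTorsionCountConverges p Y) (hZ : PowTorsionCountConverges p Z)
    (hYZ : PowTorsionCountConverges p (Y ∩ Z)) : PowTorsionCountConverges p (Y ∪ Z) := by
  obtain ⟨a, ha⟩ := hY
  obtain ⟨b, hb⟩ := hZ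
  obtain ⟨c, hc⟩ := hYZ
  refine ⟨a + b - c, ?_⟩
  push_cast
  refine ((ha.add hb).sub hc).congr fun j => ?_
  rw [sub_eq_iff_eq_add, Set.inter_union_distrib_left, Set.inter_inter_distrib_left]
  have hfin : (powTorsion A (p ^ j) : Set A).Finite := Set.toFinite _
  exact_mod_cast (Set.ncard_union_add_ncard_inter _ _ (hfin.inter_of_left Y)
    (hfin.inter_of_left Z)).symm

theorem IsFiniteUnionOfCosets.powTorsionCountConverges (hA : IsPGroup p A)
    [∀ n, Finite (powTorsion A (p ^ n))] {Y : Set A} (hY : IsFiniteUnionOfCosets Y) :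
    PowTorsionCountConverges p Y := by
  obtain ⟨𝒞, hfin, hcoset, rfl⟩ := hY
  suffices h : ∀ D, IsCosetOrEmpty D → PowTorsionCountConverges p (D ∩ ⋃₀ 𝒞) by
    simpa only [Set.univ_inter] using h Set.univ isCosetOrEmpty_univ
  induction 𝒞, hfin using Set.Finite.induction_on with
  | empty => exact fun _ _ => ⟨0, by simp⟩
  | @insert C 𝒞 _ _ ih =>
    intro D hD
    have ih := ih fun C' hC' => hcoset C' (Set.mem_insert_of_mem C hC')
    have hDC : IsCosetOrEmpty (D ∩ C) := hD.inter (hcoset C (Set.mem_insert C 𝒞))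
    rw [Set.sUnion_insert, Set.inter_union_distrib_left]
    refine (hDC.powTorsionCountConverges hA).union (ih D hD) ?_
    rw [← Set.inter_inter_distrib_left, ← Set.inter_assoc]
    exact ih _ hDC

end PadicCounting

section ClosedSets

/-- For every large `s`, each `x ∈ Z` has a power `x ^ (1 + p ^ s * w)` in `Z` with `w` prime to
`p`.  This is what remains of the Galois stability of a variety on points of `p`-power order. -/
def IsDeepPowerStable {M : Type*} [Monoid M] (p : ℕ) (Z : Set M) : Prop :=
  ∃ m, ∀ x ∈ Z, ∀ s ≥ m, ∃ w, p.Coprime w ∧ x ^ (1 + p ^ s * w) ∈ Z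

theorem IsDeepPowerStable.preimage {M N : Type*} [Monoid M] [Monoid N] {p : ℕ} {Z : Set N}
    (hZ : IsDeepPowerStable p Z) (f : M →* N) : IsDeepPowerStable p (f ⁻¹' Z) := by
  obtain ⟨m, hm⟩ := hZ
  refine ⟨m, fun x hx s hs => ?_⟩
  simpa only [Set.mem_preimage, map_pow] using hm (f x) hx s hs

variable {A : Type*} [CommGroup A] {p : ℕ} {Z : Set A}

theorem isMulTorsion_of_isPGroup {G : Type*} [Group G] [Fact p.Prime] (hG : IsPGroup p G) :
    IsMulTorsion G := fun x =>
  let ⟨n, hn⟩ := hG x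
  isOfFinOrder_iff_pow_eq_one.2 ⟨p ^ n, pow_pos (Nat.Prime.pos Fact.out) n, hn⟩

theorem mem_stabilizer_of_forall_smul_mem {ε : A} (hε : IsOfFinOrder ε)
    (hZ : ∀ z ∈ Z, ε • z ∈ Z) : ε ∈ MulAction.stabilizer A Z := by
  have hpow : ∀ n : ℕ, ∀ z ∈ Z, ε ^ n • z ∈ Z := by
    intro n
    induction n with
    | zero => simp
    | succ n ih => exact fun z hz => by simpa only [pow_succ', mul_smul] using hZ _ (ih z hz)
  obtain ⟨n, hn⟩ := hε.mem_powers_iff_mem_zpowers.2 (inv_mem (Subgroup.mem_zpowers ε))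
  refine MulAction.mem_stabilizer_set.2 fun z => ⟨fun hz => ?_, hZ z⟩
  simpa only [hn, inv_smul_smul] using hpow n _ hz

theorem isCosetOrEmpty_inter_mk_preimage (Z : Set A) (b : A ⧸ MulAction.stabilizer A Z) :
    IsCosetOrEmpty (Z ∩ QuotientGroup.mk ⁻¹' {b}) := by
  rintro x ⟨-, rfl⟩ y ⟨-, hy⟩ z ⟨hz, hzx⟩
  have hxy : x * y⁻¹ ∈ MulAction.stabilizer A Z := by
    rw [mul_comm]
    exact QuotientGroup.eq.1 hy
  refine ⟨(MulAction.mem_stabilizer_set.1 hxy z).2 hz, ?_⟩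
  rw [Set.mem_preimage, Set.mem_singleton_iff] at hy hzx ⊢
  rw [QuotientGroup.mk_mul, QuotientGroup.mk_mul, QuotientGroup.mk_inv, hy, hzx, mul_inv_cancel,
    one_mul]

/-- The exponent `1 + p ^ s * w` is applied with `s + 1` the exact order exponent of `x` modulo
`H`, so that `x` is moved by an element of order exactly `p` modulo `H`. -/
theorem exists_translate_mem_of_pow_notMem {x : A} {m : ℕ} (hA : IsPGroup p A)
    (hx : ∀ s ≥ m, ∃ w, p.Coprime w ∧ x ^ (1 + p ^ s * w) ∈ Z) (H : Subgroup A)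
    (hxH : x ^ p ^ m ∉ H) : ∃ ε ∉ H, ε ^ p ∈ H ∧ ε • x ∈ Z := by
  classical
  have hex : ∃ n, x ^ p ^ (m + n) ∈ H := by
    obtain ⟨k, hk⟩ := hA x
    exact ⟨k, by rw [add_comm, pow_add, pow_mul, hk, one_pow]; exact H.one_mem⟩
  obtain ⟨n, hn⟩ : ∃ n, Nat.find hex = n + 1 :=
    Nat.exists_eq_succ_of_ne_zero fun h => hxH (by simpa [h] using Nat.find_spec hex)
  have hlast : x ^ p ^ (m + n) ∉ H := Nat.find_min hex (by lia)
  have hnext : (x ^ p ^ (m + n)) ^ p ∈ H := by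
    rw [← pow_mul, ← pow_succ, add_assoc, ← hn]
    exact Nat.find_spec hex
  obtain ⟨w, hw, hxw⟩ := hx (m + n) (Nat.le_add_right m n)
  refine ⟨(x ^ p ^ (m + n)) ^ w, fun hmem => hlast ?_, ?_, ?_⟩
  · rw [← QuotientGroup.eq_one_iff, QuotientGroup.mk_pow] at hmem hnext ⊢
    rw [← QuotientGroup.mk_pow, ← pow_one ((x ^ p ^ (m + n) : A) : A ⧸ H), ← hw.gcd_eq_one]
    exact pow_gcd_eq_one.2 ⟨hnext, hmem⟩
  · rw [pow_right_comm]
    exact H.pow_mem hnext w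
  · rwa [smul_eq_mul, ← pow_mul, ← pow_succ, add_comm]

theorem IsDeepPowerStable.isFiniteUnionOfCosets [Fact p.Prime] (hA : IsPGroup p A)
    [∀ n, Finite (powTorsion A (p ^ n))] (hZ : IsDeepPowerStable p Z)
    (htranslate : ∀ ε ∉ MulAction.stabilizer A Z, IsFiniteUnionOfCosets (Z ∩ (ε • ·) ⁻¹' Z)) :
    IsFiniteUnionOfCosets Z := by
  obtain ⟨m, hm⟩ := hZ
  set H := MulAction.stabilizer A Z
  have hfin (n : ℕ) : Finite (powTorsion (A ⧸ H) (p ^ n)) :=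
    finite_powTorsion_quotient (isMulTorsion_of_isPGroup hA) H
  have : Finite (powTorsion (A ⧸ H) p) := by simpa only [pow_one] using hfin 1
  have hcover : Z = (⋃ b : powTorsion (A ⧸ H) (p ^ m), Z ∩ QuotientGroup.mk ⁻¹' {(b : A ⧸ H)}) ∪
      ⋃ e : {e : powTorsion (A ⧸ H) p // e ≠ 1}, Z ∩ ((e : A ⧸ H).out • ·) ⁻¹' Z := by
    refine Set.Subset.antisymm (fun x hx => ?_) (Set.union_subset
      (Set.iUnion_subset fun _ => Set.inter_subset_left)
      (Set.iUnion_subset fun _ => Set.inter_subset_left))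
    by_cases hxH : x ^ p ^ m ∈ H
    · exact .inl (Set.mem_iUnion.2 ⟨⟨x, (QuotientGroup.eq_one_iff _).2 hxH⟩, hx, rfl⟩)
    · obtain ⟨ε, hε, hεp, hεx⟩ := exists_translate_mem_of_pow_notMem hA (hm x hx) H hxH
      refine .inr (Set.mem_iUnion.2 ⟨⟨⟨ε, (QuotientGroup.eq_one_iff _).2 hεp⟩, fun h =>
        hε ((QuotientGroup.eq_one_iff _).1 (congrArg Subtype.val h))⟩, hx, ?_⟩)
      obtain ⟨h, hh⟩ := QuotientGroup.mk_out_eq_mul H ε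
      simpa only [Set.mem_preimage, hh, mul_comm ε, mul_smul] using
        (MulAction.mem_stabilizer_set.1 h.2 _).2 hεx
  rw [hcover]
  refine .union (.iUnion fun b => ?_) (.iUnion fun e => htranslate _ fun he => e.2 ?_)
  · exact (isCosetOrEmpty_inter_mk_preimage Z b).isFiniteUnionOfCosets
  · rw [← QuotientGroup.eq_one_iff, QuotientGroup.out_eq'] at he
    exact Subtype.ext he

theorem isFiniteUnionOfCosets_of_isClosed [Fact p.Prime] (hA : IsPGroup p A)
    [∀ n, Finite (powTorsion A (p ^ n))] [TopologicalSpace A] [TopologicalSpace.NoetherianSpace A]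
    [ContinuousConstSMul A A] (hpow : ∀ Z : Set A, IsClosed Z → IsDeepPowerStable p Z)
    (hZ : IsClosed Z) : IsFiniteUnionOfCosets Z := by
  lift Z to TopologicalSpace.Closeds A using hZ
  induction Z using WellFoundedLT.induction with
  | ind Z ih =>
    refine (hpow Z Z.isClosed).isFiniteUnionOfCosets hA fun ε hε => ?_
    let W : TopologicalSpace.Closeds A :=
      ⟨Z ∩ (ε • ·) ⁻¹' Z, Z.isClosed.inter (Z.isClosed.preimage (continuous_const_smul ε))⟩
    refine ih W (lt_of_le_of_ne (fun _ hx => hx.1) fun hWZ => hε ?_)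
    refine mem_stabilizer_of_forall_smul_mem (isMulTorsion_of_isPGroup hA ε) fun z hz => ?_
    rw [← hWZ] at hz
    exact hz.2

end ClosedSets

section PadicIntegers

variable {p : ℕ} [Fact p.Prime]

theorem isUnit_add_p_mul {v : ℤ_[p]} (hv : IsUnit v) (c : ℤ_[p]) :
    IsUnit (v + p * c) := by
  have hpc : -(p * c) ∈ nonunits ℤ_[p] := fun h =>
    PadicInt.p_nonunit (isUnit_of_mul_isUnit_left ((IsUnit.neg_iff _).1 h))
  by_contra h
  exact IsLocalRing.nonunits_add h hpc (by rwa [add_neg_cancel_right])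

theorem exists_one_add_pow_mul_pow_eq {m : ℕ} (hm : 2 ≤ m) {v : ℤ_[p]} (hv : IsUnit v) (i : ℕ) :
    ∃ v' : ℤ_[p], IsUnit v' ∧ (1 + p ^ m * v) ^ p ^ i = 1 + p ^ (m + i) * v' := by
  induction i with
  | zero => exact ⟨v, hv, by simp⟩
  | succ i ih =>
    obtain ⟨u, hu, hpow⟩ := ih
    obtain ⟨n, rfl⟩ := Nat.exists_eq_add_of_le hm
    obtain ⟨k, hk⟩ := Polynomial.powAddExpansion 1 ((p : ℤ_[p]) ^ (2 + n + i) * u) p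
    refine ⟨u + p * (k * p ^ (n + i) * u ^ 2), isUnit_add_p_mul hu _, ?_⟩
    rw [pow_succ, pow_mul, hpow, hk]
    ring

theorem exists_coprime_pow_dvd_sub {v : ℤ_[p]} (hv : IsUnit v) (n : ℕ) :
    ∃ w : ℕ, p.Coprime w ∧ (p : ℤ_[p]) ^ n ∣ v - w := by
  have happr : (p : ℤ_[p]) ^ (n + 1) ∣ v - v.appr (n + 1) :=
    Ideal.mem_span_singleton.1 (PadicInt.appr_spec (n + 1) v)
  refine ⟨v.appr (n + 1), ?_, (pow_dvd_pow _ n.le_succ).trans happr⟩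
  rw [Nat.Prime.coprime_iff_not_dvd Fact.out]
  intro hdvd
  have hpv : (p : ℤ_[p]) ∣ v :=
    (dvd_sub_left (Nat.cast_dvd_cast hdvd)).1 ((dvd_pow_self _ n.succ_ne_zero).trans happr)
  exact PadicInt.p_nonunit (isUnit_of_dvd_unit hpv hv)

theorem exists_eq_one_add_pow_mul_unit {n : ℕ} {x : ℤ_[p]} (hx : x ≠ 1)
    (hn : (p : ℤ_[p]) ^ n ∣ x - 1) :
    ∃ m ≥ n, ∃ v : ℤ_[p], IsUnit v ∧ x = 1 + p ^ m * v := by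
  have hx : x - 1 ≠ 0 := sub_ne_zero.2 hx
  refine ⟨(x - 1).valuation, ?_, PadicInt.unitCoeff hx, Units.isUnit _, ?_⟩
  · exact (PadicInt.mem_span_pow_iff_le_valuation _ hx n).1 (Ideal.mem_span_singleton.2 hn)
  · rw [mul_comm, ← PadicInt.unitCoeff_spec hx, add_sub_cancel]

end PadicIntegers

section CyclotomicCharacter

variable {p : ℕ} [Fact p.Prime] {L : Type*}

theorem pow_dvd_cyclotomicCharacter_sub_iff [CommRing L] [IsDomain L]
    [∀ i, HasEnoughRootsOfUnity L (p ^ i)] {σ : L ≃+* L} {n k : ℕ} :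
    (p : ℤ_[p]) ^ n ∣ (cyclotomicCharacter L p σ : ℤ_[p]) - k ↔
      ∀ x : L, x ^ p ^ n = 1 → σ x = x ^ k := by
  have hval (x : L) (hx : x ^ p ^ n = 1) : x ^ (k : ZMod (p ^ n)).val = x ^ k := by
    rw [ZMod.val_natCast, ← pow_eq_pow_mod k hx]
  rw [← Ideal.mem_span_singleton, ← PadicInt.ker_toZModPow, RingHom.sub_mem_ker_iff, map_natCast]
  refine ⟨fun h x hx => ?_, fun h => ?_⟩
  · rw [cyclotomicCharacter.spec p σ x hx, h, hval x hx]
  · rw [cyclotomicCharacter.toZModPow]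
    refine (modularCyclotomicCharacter.unique L _ σ fun t ht => ?_).symm
    have ht : (t : L) ^ p ^ n = 1 := by simpa using congrArg Units.val ht
    rw [h t ht, hval t ht]

variable [Field L] [∀ i, HasEnoughRootsOfUnity L (p ^ i)]
  {F : Type*} [Field F] [Algebra F L] [IsGalois F L]

theorem infinite_setOf_exists_pow_prime_pow_eq_one (p : ℕ) [Fact p.Prime] (L : Type*) [Field L]
    [∀ i, HasEnoughRootsOfUnity L (p ^ i)] : {x : L | ∃ n, x ^ p ^ n = 1}.Infinite := by
  choose ζ hζ using fun n => HasEnoughRootsOfUnity.exists_primitiveRoot L (p ^ n)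
  have hinj : Function.Injective ζ := fun a b hab =>
    Nat.pow_right_injective (Nat.Prime.two_le Fact.out) ((hζ a).unique (hab ▸ hζ b))
  exact Set.infinite_of_injective_forall_mem hinj fun n => ⟨n, (hζ n).pow_eq_one⟩

theorem exists_cyclotomicCharacter_ne_one {M : IntermediateField F L}
    (hM : {x : M | ∃ n, x ^ p ^ n = 1}.Finite) :
    ∃ σ ∈ fixingSubgroup (L ≃+* L) (M : Set L), cyclotomicCharacter L p σ ≠ 1 := by
  obtain ⟨ζ, ⟨n, hζ⟩, hζM⟩ : ∃ ζ : L, (∃ n, ζ ^ p ^ n = 1) ∧ ζ ∉ M := by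
    by_contra! h
    exact infinite_setOf_exists_pow_prime_pow_eq_one p L ((hM.image Subtype.val).subset fun x hx =>
      ⟨⟨x, h x hx⟩, hx.imp fun _ hn => Subtype.ext hn, rfl⟩)
  rw [← InfiniteGalois.fixedField_fixingSubgroup M, IntermediateField.mem_fixedField_iff] at hζM
  push Not at hζM
  obtain ⟨σ, hσ, hσζ⟩ := hζM
  refine ⟨σ.toRingEquiv, (mem_fixingSubgroup_iff _).2 fun x hx => hσ ⟨x, hx⟩, fun h => hσζ ?_⟩
  have hdvd : (p : ℤ_[p]) ^ n ∣ (cyclotomicCharacter L p σ.toRingEquiv : ℤ_[p]) - (1 : ℕ) := by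
    simp [h]
  simpa using pow_dvd_cyclotomicCharacter_sub_iff.1 hdvd ζ hζ

/-- The bound `m ≥ 2` makes the `p`-th power of `1 + p ^ m * v` increase `m` by exactly one even
for `p = 2`. -/
theorem exists_cyclotomicCharacter_eq_one_add (hfin : ∀ M : IntermediateField F L,
      FiniteDimensional F M → {x : M | ∃ n, x ^ p ^ n = 1}.Finite)
    (M : IntermediateField F L) [FiniteDimensional F M] :
    ∃ σ ∈ fixingSubgroup (L ≃+* L) (M : Set L), ∃ m ≥ 2, ∃ v : ℤ_[p], IsUnit v ∧
      (cyclotomicCharacter L p σ : ℤ_[p]) = 1 + p ^ m * v := by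
  let T : Set L := {x | x ^ p ^ 2 = 1}
  have : Finite T := (Polynomial.nthRootsFinset (p ^ 2) (1 : L)).finite_toSet.subset fun x hx =>
    (Polynomial.mem_nthRootsFinset (NeZero.pos _) 1).2 hx
  have : FiniteDimensional F (IntermediateField.adjoin F T) :=
    IntermediateField.finiteDimensional_adjoin fun x _ => Algebra.IsIntegral.isIntegral x
  obtain ⟨σ, hσ, hχ⟩ := exists_cyclotomicCharacter_ne_one
    (hfin (M ⊔ IntermediateField.adjoin F T) inferInstance)
  rw [mem_fixingSubgroup_iff] at hσ
  refine ⟨σ, (mem_fixingSubgroup_iff _).2 fun x hx => hσ x (le_sup_left (a := M) hx), ?_⟩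
  refine exists_eq_one_add_pow_mul_unit (Units.val_eq_one.not.2 hχ) ?_
  have hdvd : (p : ℤ_[p]) ^ 2 ∣ (cyclotomicCharacter L p σ : ℤ_[p]) - (1 : ℕ) :=
    pow_dvd_cyclotomicCharacter_sub_iff.2 fun x hx => by
      rw [pow_one]
      exact hσ x (le_sup_right (a := M) (IntermediateField.subset_adjoin F T hx))
  rwa [Nat.cast_one] at hdvd

theorem exists_fixing_forall_eq_pow (hfin : ∀ M : IntermediateField F L,
      FiniteDimensional F M → {x : M | ∃ n, x ^ p ^ n = 1}.Finite)
    (M : IntermediateField F L) [FiniteDimensional F M] :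
    ∃ m, ∀ s ≥ m, ∃ τ ∈ fixingSubgroup (L ≃+* L) (M : Set L), ∀ n, ∃ w, p.Coprime w ∧
      ∀ x : L, x ^ p ^ n = 1 → τ x = x ^ (1 + p ^ s * w) := by
  obtain ⟨σ, hσ, m, hm, v, hv, hχ⟩ := exists_cyclotomicCharacter_eq_one_add hfin M
  refine ⟨m, fun s hs => ?_⟩
  obtain ⟨i, rfl⟩ := Nat.exists_eq_add_of_le hs
  obtain ⟨u, hu, hpow⟩ := exists_one_add_pow_mul_pow_eq hm hv i
  refine ⟨σ ^ p ^ i, pow_mem hσ _, fun n => ?_⟩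
  obtain ⟨w, hw, hdvd⟩ := exists_coprime_pow_dvd_sub hu n
  refine ⟨w, hw, pow_dvd_cyclotomicCharacter_sub_iff.1 ?_⟩
  have hsub : (cyclotomicCharacter L p (σ ^ p ^ i) : ℤ_[p]) - (1 + p ^ (m + i) * w : ℕ) =
      p ^ (m + i) * (u - w) := by
    rw [map_pow, Units.val_pow_eq_pow_val, hχ, hpow]
    push_cast
    ring
  exact hsub ▸ hdvd.mul_left _

end CyclotomicCharacter

section ZeroLocus

variable {ι L K : Type*}

theorem repr_eval_comp_ringHom [CommRing L] [CommRing K] [Algebra L K] {κ : Type*}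
    (b : Module.Basis κ L K) (σ : L →+* L) {f : MvPolynomial ι K}
    (hσ : ∀ α ∈ f.support, ∀ k, σ (b.repr (f.coeff α) k) = b.repr (f.coeff α) k)
    (y : ι → L) (k : κ) :
    b.repr (MvPolynomial.eval (fun i => algebraMap L K (σ (y i))) f) k =
      σ (b.repr (MvPolynomial.eval (fun i => algebraMap L K (y i)) f) k) := by
  have hrepr (y : ι → L) :
      b.repr (MvPolynomial.eval (fun i => algebraMap L K (y i)) f) k =
        ∑ α ∈ f.support, (∏ i ∈ α.support, y i ^ α i) * b.repr (f.coeff α) k := by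
    simp only [MvPolynomial.eval_eq, ← map_pow, ← map_prod, mul_comm (f.coeff _),
      ← Algebra.smul_def, map_sum, map_smul, Finsupp.finsetSum_apply, Finsupp.smul_apply,
      smul_eq_mul]
  rw [hrepr, hrepr, map_sum]
  refine Finset.sum_congr rfl fun α hα => ?_
  rw [map_mul, map_prod, hσ α hα]
  simp only [map_pow]

theorem exists_algebraMap_eq_of_pow_eq_one [Field L] [CommRing K] [IsDomain K] [Algebra L K]
    {n : ℕ} [NeZero n] [HasEnoughRootsOfUnity L n] {x : K} (hx : x ^ n = 1) :
    ∃ y : L, y ^ n = 1 ∧ algebraMap L K y = x := by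
  obtain ⟨ζ, hζ⟩ := HasEnoughRootsOfUnity.exists_primitiveRoot L n
  obtain ⟨i, -, hi⟩ :=
    (hζ.map_of_injective (algebraMap L K).injective).eq_pow_of_pow_eq_one hx
  exact ⟨ζ ^ i, by rw [pow_right_comm, hζ.pow_eq_one, one_pow], by rw [map_pow, hi]⟩

variable {p : ℕ} [Fact p.Prime] [Field K] {F : Type*} [Field F]

/-- The points of `p`-power order of the variety defined by `I`. -/
def primaryZeroLocus (p : ℕ) (I : Ideal (MvPolynomial ι K)) : Set (ι → K) :=
  {x | (∃ n, x ^ p ^ n = 1) ∧ x ∈ MvPolynomial.zeroLocus K I}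

/-- On points of `p`-power order, a suitable automorphism of `L` over the field generated by the
coordinates of the coefficients acts as `x ↦ x ^ (1 + p ^ s * w)`. -/
theorem isDeepPowerStable_primaryZeroLocus_of_isGalois [Field L] [Algebra F L] [IsGalois F L]
    [Algebra L K] [∀ i, HasEnoughRootsOfUnity L (p ^ i)]
    (hfin : ∀ M : IntermediateField F L, FiniteDimensional F M →
      {x : M | ∃ n, x ^ p ^ n = 1}.Finite)
    {I : Ideal (MvPolynomial ι K)} (hI : I.FG) :
    IsDeepPowerStable p (primaryZeroLocus p I) := by
  obtain ⟨S, rfl⟩ := hI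
  let b := Module.Basis.ofVectorSpace L K
  let C : Set L := ⋃ f ∈ S, ⋃ α ∈ f.support, Set.range (b.repr (f.coeff α))
  have : Finite C := Set.Finite.biUnion S.finite_toSet fun f _ =>
    f.support.finite_toSet.biUnion fun α _ => Finsupp.finite_range _
  have : FiniteDimensional F (IntermediateField.adjoin F C) :=
    IntermediateField.finiteDimensional_adjoin fun x _ => Algebra.IsIntegral.isIntegral x
  obtain ⟨m, hm⟩ := exists_fixing_forall_eq_pow hfin (IntermediateField.adjoin F C)
  refine ⟨m, fun x ⟨⟨n, hn⟩, hx⟩ s hs => ?_⟩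
  obtain ⟨τ, hτ, hpow⟩ := hm s hs
  obtain ⟨w, hw, hτw⟩ := hpow n
  choose y hy hyx using fun i => exists_algebraMap_eq_of_pow_eq_one (L := L) (congrFun hn i)
  obtain rfl : (fun i => algebraMap L K (y i)) = x := funext hyx
  refine ⟨w, hw, ⟨n, by rw [pow_right_comm, hn, one_pow]⟩, ?_⟩
  have hτy : (fun i => algebraMap L K (y i)) ^ (1 + p ^ s * w) =
      fun i => algebraMap L K (τ (y i)) := by
    ext i
    rw [hτw (y i) (hy i), map_pow, Pi.pow_apply]
  rw [MvPolynomial.zeroLocus_span] at hx ⊢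
  rw [hτy]
  intro f hf
  have hfix : ∀ α ∈ f.support, ∀ k, τ (b.repr (f.coeff α) k) = b.repr (f.coeff α) k :=
    fun α hα k => (mem_fixingSubgroup_iff _).1 hτ _ <| IntermediateField.subset_adjoin F C <|
      Set.mem_biUnion hf (Set.mem_biUnion hα (Set.mem_range_self k))
  refine b.ext_elem fun k => ?_
  have hfx := hx f hf
  rw [MvPolynomial.aeval_eq_eval] at hfx ⊢
  exact (repr_eval_comp_ringHom b (τ : L →+* L) hfix y k).trans (by simp [hfx])

theorem finite_setOf_exists_pow_prime_pow_eq_one_of_numberField (p : ℕ) [Fact p.Prime]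
    (M : Type*) [Field M] [NumberField M] : {x : M | ∃ n, x ^ p ^ n = 1}.Finite := by
  refine (NumberField.Embeddings.finite_of_norm_le M ℂ 1).subset fun x ⟨n, hn⟩ => ⟨?_, fun φ => ?_⟩
  · exact .of_pow (NeZero.pos (p ^ n)) (hn ▸ isIntegral_one)
  · exact (Complex.norm_eq_one_of_pow_eq_one (by rw [← map_pow, hn, map_one])
      (NeZero.ne (p ^ n))).le

theorem isDeepPowerStable_primaryZeroLocus_of_perfectField [PerfectField F] [Algebra F K]
    [IsAlgClosed K] [NeZero (p : K)]
    (hfin : ∀ M : IntermediateField F (AlgebraicClosure F), FiniteDimensional F M →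
      {x : M | ∃ n, x ^ p ^ n = 1}.Finite)
    {I : Ideal (MvPolynomial ι K)} (hI : I.FG) : IsDeepPowerStable p (primaryZeroLocus p I) := by
  let lift : AlgebraicClosure F →ₐ[F] K := IsAlgClosed.lift
  let _ : Algebra (AlgebraicClosure F) K := lift.toAlgebra
  have : NeZero (p : AlgebraicClosure F) :=
    ⟨fun h => NeZero.ne (p : K) (by simpa using congrArg lift h)⟩
  exact isDeepPowerStable_primaryZeroLocus_of_isGalois hfin hI

theorem eq_one_of_pow_prime_pow_eq_one [CharP K p] {n : ℕ} {x : ι → K} (hx : x ^ p ^ n = 1) :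
    x = 1 := by
  ext i
  have : ExpChar K p := .prime Fact.out
  simpa using (ExpChar.pow_prime_pow_mul_eq_one_iff p n 1 (x i)).1 (by simpa using congrFun hx i)

theorem isDeepPowerStable_primaryZeroLocus [IsAlgClosed K] {I : Ideal (MvPolynomial ι K)}
    (hI : I.FG) : IsDeepPowerStable p (primaryZeroLocus p I) := by
  by_cases hpK : (p : K) = 0
  · have : CharP K p := (CharP.charP_iff_prime_eq_zero Fact.out).2 hpK
    refine ⟨0, fun x hx s _ => ⟨1, Nat.coprime_one_right p, ?_⟩⟩
    obtain ⟨n, hn⟩ := hx.1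
    obtain rfl := eq_one_of_pow_prime_pow_eq_one hn
    rwa [one_pow]
  · have : NeZero (p : K) := ⟨hpK⟩
    obtain _ | ⟨l, _, _⟩ := CharP.exists' K
    · refine isDeepPowerStable_primaryZeroLocus_of_perfectField (F := ℚ) (fun M hM => ?_) hI
      have : NumberField M := ⟨⟩
      exact finite_setOf_exists_pow_prime_pow_eq_one_of_numberField p M
    · let _ : Algebra (ZMod l) K := ZMod.algebra K l
      refine isDeepPowerStable_primaryZeroLocus_of_perfectField (F := ZMod l) (fun M hM => ?_) hI
      have : Finite M := Module.finite_of_finite (ZMod l)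
      exact Set.toFinite _

end ZeroLocus

section ZariskiTopology

variable {A ι K : Type*} [CommGroup A] [Field K] (χ : A →* (ι → K))

/-- The Zariski topology on a group of points of affine space, whose closed sets are the preimages
of zero loci; it is pulled back from the prime spectrum to inherit Noetherianity. -/
@[reducible]
noncomputable def zariskiTopology : TopologicalSpace A :=
  .induced (fun g => MvPolynomial.pointToPoint (k := K) (χ g)) inferInstance

theorem isClosed_zariskiTopology_iff {Z : Set A} : IsClosed[zariskiTopology χ] Z ↔
    ∃ I : Ideal (MvPolynomial ι K), χ ⁻¹' MvPolynomial.zeroLocus K I = Z := by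
  have hpre (I : Ideal (MvPolynomial ι K)) :
      (fun g => MvPolynomial.pointToPoint (k := K) (χ g)) ⁻¹' PrimeSpectrum.zeroLocus I =
        χ ⁻¹' MvPolynomial.zeroLocus K I := by
    ext g
    exact forall₂_congr fun f _ => MvPolynomial.mem_vanishingIdeal_singleton_iff (χ g) f
  refine isClosed_induced_iff.trans ⟨?_, fun ⟨I, hI⟩ =>
    ⟨_, PrimeSpectrum.isClosed_zeroLocus (I : Set (MvPolynomial ι K)), (hpre I).trans hI⟩⟩
  rintro ⟨W, hW, rfl⟩
  obtain ⟨I, rfl⟩ := (PrimeSpectrum.isClosed_iff_zeroLocus_ideal W).1 hW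
  exact ⟨I, (hpre I).symm⟩

theorem noetherianSpace_zariskiTopology [Finite ι] :
    @TopologicalSpace.NoetherianSpace A (zariskiTopology χ) :=
  let _ := zariskiTopology χ
  Topology.IsInducing.noetherianSpace ⟨rfl⟩

theorem continuousConstSMul_zariskiTopology :
    @ContinuousConstSMul A A (zariskiTopology χ) _ := by
  let _ := zariskiTopology χ
  refine ⟨fun ε => continuous_iff_isClosed.2 fun Z hZ => ?_⟩
  obtain ⟨I, rfl⟩ := (isClosed_zariskiTopology_iff χ).1 hZ
  let scale : MvPolynomial ι K →ₐ[K] MvPolynomial ι K :=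
    MvPolynomial.aeval fun i => MvPolynomial.C (χ ε i) * MvPolynomial.X i
  refine (isClosed_zariskiTopology_iff χ).2 ⟨.span (scale '' I), ?_⟩
  have hscale (g : A) (f : MvPolynomial ι K) :
      MvPolynomial.aeval (χ g) (scale f) = MvPolynomial.aeval (χ (ε • g)) f := by
    rw [MvPolynomial.comp_aeval_apply]
    simp only [map_mul, MvPolynomial.aeval_C, MvPolynomial.aeval_X, smul_eq_mul,
      Algebra.algebraMap_self_apply]
    rfl
  ext g
  simp only [MvPolynomial.zeroLocus_span, Set.forall_mem_image, Set.mem_preimage,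
    Set.mem_ofPred_eq, hscale]
  rfl

theorem isFiniteUnionOfCosets_preimage_zeroLocus [Finite ι] [IsAlgClosed K] {p : ℕ}
    [Fact p.Prime] (hA : IsPGroup p A) [∀ n, Finite (powTorsion A (p ^ n))]
    (I : Ideal (MvPolynomial ι K)) :
    IsFiniteUnionOfCosets (χ ⁻¹' MvPolynomial.zeroLocus K I) := by
  let _ := zariskiTopology χ
  have := noetherianSpace_zariskiTopology χ
  have := continuousConstSMul_zariskiTopology χ
  refine isFiniteUnionOfCosets_of_isClosed hA (fun Z hZ => ?_)
    ((isClosed_zariskiTopology_iff χ).2 ⟨I, rfl⟩)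
  obtain ⟨J, rfl⟩ := (isClosed_zariskiTopology_iff χ).1 hZ
  have hprimary : χ ⁻¹' MvPolynomial.zeroLocus K J = χ ⁻¹' primaryZeroLocus p J :=
    Set.ext fun g => ⟨fun hg => ⟨(hA g).imp fun n hn => by rw [← map_pow, hn, map_one], hg⟩,
      fun hg => hg.2⟩
  rw [hprimary]
  exact (isDeepPowerStable_primaryZeroLocus J.fg_of_isNoetherianRing).preimage χ

end ZariskiTopology

section Domain

theorem finite_powTorsion_pi_units (ι R : Type*) [Finite ι] [CommRing R] [IsDomain R] (n : ℕ)
    [NeZero n] : Finite (powTorsion (ι → Rˣ) n) :=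
  .of_injective (fun x i => (⟨(x : ι → Rˣ) i, congrFun x.2 i⟩ : rootsOfUnity n R))
    fun _ _ h => Subtype.ext (funext fun i => congrArg Subtype.val (congrFun h i))

variable {p : ℕ} [Fact p.Prime] {A ι R : Type*} [CommGroup A] [Finite ι] [CommRing R]

theorem isFiniteUnionOfCosets_zeros_of_injective (hA : IsPGroup p A)
    [∀ n, Finite (powTorsion A (p ^ n))] {K : Type*} [Field K] [IsAlgClosed K] [Algebra R K]
    (hinj : Function.Injective (algebraMap R K))
    (φ : A →* (ι → Rˣ)) (S : Set (MvPolynomial ι R)) :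
    IsFiniteUnionOfCosets {g | ∀ f ∈ S, MvPolynomial.eval (fun i => (φ g i : R)) f = 0} := by
  let χ : A →* (ι → K) :=
    MonoidHom.pi fun i => (algebraMap R K : R →* K).comp
      ((Units.coeHom R).comp ((Pi.evalMonoidHom _ i).comp φ))
  have hmap (g : A) (f : MvPolynomial ι R) :
      MvPolynomial.aeval (χ g) (f.map (algebraMap R K)) =
        algebraMap R K (MvPolynomial.eval (fun i => (φ g i : R)) f) :=
    (MvPolynomial.map_eval _ _ f).symm
  have hzeros : χ ⁻¹' MvPolynomial.zeroLocus K (.span (MvPolynomial.map (algebraMap R K) '' S)) =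
      {g | ∀ f ∈ S, MvPolynomial.eval (fun i => (φ g i : R)) f = 0} := by
    ext g
    simp only [MvPolynomial.zeroLocus_span, Set.forall_mem_image, Set.mem_preimage,
      Set.mem_ofPred_eq, hmap, map_eq_zero_iff _ hinj]
  rw [← hzeros]
  exact isFiniteUnionOfCosets_preimage_zeroLocus χ hA _

theorem isFiniteUnionOfCosets_zeros [IsDomain R] (hA : IsPGroup p A)
    [∀ n, Finite (powTorsion A (p ^ n))] (φ : A →* (ι → Rˣ)) (S : Set (MvPolynomial ι R)) :
    IsFiniteUnionOfCosets {g | ∀ f ∈ S, MvPolynomial.eval (fun i => (φ g i : R)) f = 0} := by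
  have hinj : Function.Injective (algebraMap R (AlgebraicClosure (FractionRing R))) := by
    rw [IsScalarTower.algebraMap_eq R (FractionRing R), RingHom.coe_comp]
    exact (algebraMap (FractionRing R) _).injective.comp
      (IsFractionRing.injective R (FractionRing R))
  exact isFiniteUnionOfCosets_zeros_of_injective hA hinj φ S

theorem padic_limit_count_roots_of_unity_in_variety_general (p : ℕ) [Fact p.Prime] {ι R : Type*}
    [Finite ι] [CommRing R] [IsDomain R] (S : Set (MvPolynomial ι R)) (E : Subgroup (ι → Rˣ)) :
    ∃ z : ℤ, Tendsto (fun j => (({ζ : ι → Rˣ | ∀ t, ζ t ^ p ^ j = 1} ∩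
      {ζ | ∀ f ∈ S, MvPolynomial.eval (fun i => (ζ i : R)) f = 0} ∩ (E : Set (ι → Rˣ))).ncard :
        ℤ_[p])) atTop (𝓝 (z : ℤ_[p])) := by
  let A := CommGroup.primaryComponent E p
  let φ : A →* (ι → Rˣ) := E.subtype.comp A.subtype
  have hφ : Function.Injective φ := E.subtype_injective.comp A.subtype_injective
  have (n : ℕ) : Finite (powTorsion A (p ^ n)) :=
    have := finite_powTorsion_pi_units ι R (p ^ n)
    finite_powTorsion_of_injective hφ
  have hA : IsPGroup p A := CommGroup.primaryComponent.isPGroup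
  obtain ⟨z, hz⟩ := (isFiniteUnionOfCosets_zeros hA φ S).powTorsionCountConverges hA
  refine ⟨z, hz.congr fun j => ?_⟩
  rw [← Set.ncard_image_of_injective _ hφ]
  congr 2
  ext ζ
  constructor
  · rintro ⟨g, ⟨hg, hS⟩, rfl⟩
    exact ⟨⟨congrFun (map_mem_powTorsion φ hg), hS⟩, g.1.2⟩
  · rintro ⟨⟨hζ, hS⟩, hE⟩
    have hζ : ζ ^ p ^ j = 1 := funext hζ
    have hζA : (⟨ζ, hE⟩ : E) ∈ A :=
      CommGroup.mem_primaryComponent.2 ⟨j, Subtype.ext hζ⟩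
    exact ⟨⟨⟨ζ, hE⟩, hζA⟩, ⟨Subtype.ext (Subtype.ext hζ), hS⟩, rfl⟩

end Domain

/-- Let `K` be an algebraically closed field, `d ≥ 1`, `V ⊆ (Kˣ)^d` a Zariski closed
subset and `E ⊆ (Kˣ)^d` a subgroup.  The number `a j` of points of `μ(p^j)^d` lying in
`V ∩ E` converges `p`-adically to an integer as `j → ∞`. -/
theorem padic_limit_count_roots_of_unity_in_variety (p : ℕ) (hp : Fact p.Prime)
    (K : Type*) [Field K] [IsAlgClosed K] (d : ℕ) (hd : 1 ≤ d)
    (S : Set (MvPolynomial (Fin d) K))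
    (V : Set (Fin d → Kˣ))
    (hV : V = {ζ : Fin d → Kˣ | ∀ f ∈ S, MvPolynomial.eval (fun i => (ζ i : K)) f = 0})
    (E : Subgroup (Fin d → Kˣ))
    (a : ℕ → ℕ)
    (ha : ∀ j, a j =
      ({ζ : Fin d → Kˣ | ∀ t, ζ t ^ (p ^ j) = 1} ∩ V ∩ (E : Set (Fin d → Kˣ))).ncard) :
    ∃ z : ℤ, Tendsto (fun j => (a j : ℤ_[p])) atTop (nhds ((z : ℤ_[p]))) := by
  subst hV
  obtain rfl := funext ha
  exact padic_limit_count_roots_of_unity_in_variety_general p S E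
end

section
/- Let p be a prime, K an algebraically closed field with char(K) ≠ p, and G a finite p-group. Then every irreducible representation of G on a finite-dimensional K-vector space V has dimension a power of p, i.e. dim_K V = p^j for some j ∈ ℕ. -/
/-!
Let `G` be nilpotent and `Z ≤ G` the normal subgroup of elements acting as scalars. If `Z ≠ G`,
some `a ∉ Z` is central modulo `Z`, so `ρ a` commutes with every `ρ g` up to a scalar `χ g`, and
`χ` is a character of `G`. Thus `ρ g` maps the `μ`-eigenspace of `ρ a` onto the
`χ g * μ`-eigenspace, and by irreducibility `V` is the direct sum of the distinct translates of one
eigenspace `E`. Their number is the index of `ker χ`, and `E` is an irreducible representation of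
`ker χ` of smaller dimension than `V`. By induction, `dim V` is the index of a subgroup of `G`, and
in a `p`-group every finite index is a power of `p`.
-/

open Module
open scoped commutatorElement

section Group

variable {G : Type*} [Group G]

theorem exists_notMem_forall_commutatorElement_mem [Group.IsNilpotent G] {N : Subgroup G}
    [N.Normal] (hN : N ≠ ⊤) : ∃ a ∉ N, ∀ g, ⁅a, g⁆ ∈ N := by
  have : Nontrivial (G ⧸ N) := QuotientGroup.nontrivial_iff.2 hN
  obtain ⟨⟨q, hq⟩, hq_ne⟩ :=
    Subgroup.ne_bot_iff_exists_ne_one.1 (Group.IsNilpotent.center_ne_bot (G := G ⧸ N))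
  obtain ⟨a, rfl⟩ := QuotientGroup.mk_surjective q
  refine ⟨a, fun ha => hq_ne (Subtype.ext ((QuotientGroup.eq_one_iff a).2 ha)), fun g => ?_⟩
  rw [← QuotientGroup.eq_one_iff, ← QuotientGroup.mk'_apply, map_commutatorElement,
    commutatorElement_eq_one_iff_mul_comm]
  exact (Subgroup.mem_center_iff.1 hq g).symm

end Group

section Irreducible

variable {K G V : Type*} [CommSemiring K] [Monoid G] [AddCommMonoid V] [Module K V]
  {ρ : Representation K G V}

theorem iSup_map_eq_top_of_isIrreducibleRep (hρ : ρ.IsIrreducibleRep) {W : Submodule K V}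
    (hW : W ≠ ⊥) : ⨆ g, W.map (ρ g) = ⊤ := by
  refine (hρ.2 _ fun g => ?_).resolve_left fun h => hW ?_
  · rw [Submodule.map_iSup]
    refine iSup_le fun h => ?_
    rw [← Submodule.map_comp, ← Module.End.mul_eq_comp, ← map_mul]
    exact le_iSup (fun g => W.map (ρ g)) (g * h)
  · simpa [Module.End.one_eq_id] using iSup_eq_bot.1 h 1

end Irreducible

section Scalar

variable {K G V : Type*} [CommRing K] [Group G] [AddCommGroup V] [Module K V]

/-- The subgroup of elements acting as scalars, that is, the kernel of the associated projective
representation. -/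
def scalarSubgroup (ρ : Representation K G V) : Subgroup G :=
  (Units.map (algebraMap K (End K V) : K →* End K V)).range.comap ρ.asGroupHom

variable {ρ : Representation K G V}

theorem mem_scalarSubgroup_iff {g : G} :
    g ∈ scalarSubgroup ρ ↔ ∃ c : Kˣ, algebraMap K (End K V) c = ρ g := by
  simp [scalarSubgroup, Units.ext_iff, Representation.asGroupHom_apply]

instance scalarSubgroup_normal : (scalarSubgroup ρ).Normal := by
  refine ⟨fun a ha g => ?_⟩
  obtain ⟨c, hc⟩ := mem_scalarSubgroup_iff.1 ha
  refine mem_scalarSubgroup_iff.2 ⟨c, ?_⟩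
  rw [map_mul, map_mul, ← hc, ← Algebra.commutes, mul_assoc, ← map_mul, mul_inv_cancel, map_one,
    mul_one]

end Scalar

section SemiInvariant

variable {K G V : Type*} [CommRing K] [Group G] [AddCommGroup V] [Module K V]

/-- `T` is a semi-invariant of weight `χ` for the conjugation action of `G` on endomorphisms of `V`:
`(ρ g)⁻¹ * T * ρ g = χ g • T` for all `g`, written here without inverses. -/
def IsSemiInvariant (ρ : Representation K G V) (χ : G →* Kˣ) (T : End K V) : Prop :=
  ∀ g, T * ρ g = (χ g : K) • (ρ g * T)

variable {ρ : Representation K G V}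

theorem exists_isSemiInvariant_of_commutatorElement_mem [FaithfulSMul K (End K V)] {a : G}
    (ha : ∀ g, ⁅a, g⁆ ∈ scalarSubgroup ρ) : ∃ χ, IsSemiInvariant ρ χ (ρ a) := by
  choose c hc using fun g => mem_scalarSubgroup_iff.1 (ha g)
  have hc_mul (g h : G) : c (g * h) = c g * c h := by
    apply Units.ext
    apply FaithfulSMul.algebraMap_injective K (End K V)
    calc algebraMap K (End K V) (c (g * h))
        = ρ (⁅a, g⁆ * g * ⁅a, h⁆ * g⁻¹) := by
          rw [hc, commutatorElement_def, commutatorElement_def, commutatorElement_def]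
          group
      _ = algebraMap K (End K V) (c g) * algebraMap K (End K V) (c h) * ρ (g * g⁻¹) := by
          rw [map_mul, map_mul, map_mul, ← hc, ← hc, mul_assoc _ (ρ g), ← Algebra.commutes,
            ← mul_assoc, mul_assoc, ← map_mul, ← map_mul ρ]
      _ = algebraMap K (End K V) (c g * c h : Kˣ) := by simp
  refine ⟨MonoidHom.mk' c hc_mul, fun g => ?_⟩
  calc ρ a * ρ g = ρ ⁅a, g⁆ * (ρ g * ρ a) := by
        rw [← map_mul, ← map_mul, ← map_mul, commutatorElement_def]
        group
    _ = (c g : K) • (ρ g * ρ a) := by rw [← hc, Algebra.smul_def]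

namespace IsSemiInvariant

variable {χ : G →* Kˣ} {T : End K V} {μ : K}

theorem map_eigenspace_le (hT : IsSemiInvariant ρ χ T) (g : G) (μ : K) :
    (T.eigenspace μ).map (ρ g) ≤ T.eigenspace (χ g * μ) := by
  rintro _ ⟨v, hv, rfl⟩
  have hTv : T (ρ g v) = (χ g : K) • ρ g (T v) := LinearMap.congr_fun (hT g) v
  rw [End.mem_eigenspace_iff, hTv, End.mem_eigenspace_iff.1 hv, map_smul, smul_smul]

theorem map_eigenspace (hT : IsSemiInvariant ρ χ T) (g : G) (μ : K) :
    (T.eigenspace μ).map (ρ g) = T.eigenspace (χ g * μ) := by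
  refine (hT.map_eigenspace_le g μ).antisymm fun w hw => ⟨ρ g⁻¹ w, ?_, by simp⟩
  have := hT.map_eigenspace_le g⁻¹ _ ⟨w, hw, rfl⟩
  simpa using this

theorem hasEigenvalue_mul (hT : IsSemiInvariant ρ χ T) (hμ : T.HasEigenvalue μ) (g : G) :
    T.HasEigenvalue (χ g * μ) := by
  refine fun h => hμ (Submodule.map_injective_of_injective (ρ.apply_bijective g).1 ?_)
  exact (hT.map_eigenspace g μ).trans (h.trans (Submodule.map_bot (ρ g)).symm)

theorem finrank_eigenspace_mul (hT : IsSemiInvariant ρ χ T) (g : G) (μ : K) :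
    finrank K (T.eigenspace (χ g * μ)) = finrank K (T.eigenspace μ) := by
  rw [← hT.map_eigenspace]
  exact ((T.eigenspace μ).equivMapOfInjective (ρ g) (ρ.apply_bijective g).1).finrank_eq.symm

/-- The action of the inertia group `χ.ker` on an eigenspace of a semi-invariant of weight `χ`. -/
def eigenspaceRep (hT : IsSemiInvariant ρ χ T) (μ : K) :
    Representation K χ.ker (T.eigenspace μ) :=
  Representation.subrepresentation (ρ.comp χ.ker.subtype) (T.eigenspace μ) fun g => by
    have := hT.map_eigenspace_le g μ
    rwa [χ.mem_ker.1 g.2, Units.val_one, one_mul, Submodule.map_le_iff_le_comap] at this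

end IsSemiInvariant

end SemiInvariant

section Field

variable {K G V : Type*} [Field K] [Group G] [AddCommGroup V] [Module K V]
  {ρ : Representation K G V}

theorem finrank_eq_one_of_scalarSubgroup_eq_top (hρ : ρ.IsIrreducibleRep)
    (h : scalarSubgroup ρ = ⊤) : finrank K V = 1 := by
  have := hρ.1
  refine isSimpleModule_iff_finrank_eq_one.1 ((isSimpleModule_iff K V).2
    { eq_bot_or_eq_top := fun W => hρ.2 W fun g => ?_ })
  obtain ⟨c, hc⟩ := mem_scalarSubgroup_iff.1 (h ▸ Subgroup.mem_top g)
  rintro _ ⟨w, hw, rfl⟩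
  rw [← hc]
  exact W.smul_mem c hw

namespace IsSemiInvariant

variable {χ : G →* Kˣ} {T : End K V} {μ : K}

theorem isInternal_eigenspace (hT : IsSemiInvariant ρ χ T) (hρ : ρ.IsIrreducibleRep)
    (hμ : T.HasEigenvalue μ) (hμ_ne : μ ≠ 0) [DecidableEq χ.range] :
    DirectSum.IsInternal fun c : χ.range => T.eigenspace ((c : Kˣ) * μ) := by
  refine DirectSum.isInternal_submodule_of_iSupIndep_of_iSup_eq_top ?_ ?_
  · exact T.eigenspaces_iSupIndep.comp fun c d h =>
      Subtype.ext (Units.ext (mul_right_cancel₀ hμ_ne h))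
  · rw [eq_top_iff, ← iSup_map_eq_top_of_isIrreducibleRep hρ hμ]
    refine iSup_le fun g => ?_
    rw [hT.map_eigenspace]
    exact le_iSup (fun c : χ.range => T.eigenspace ((c : Kˣ) * μ)) ⟨χ g, g, rfl⟩

theorem finite_range [FiniteDimensional K V] (hT : IsSemiInvariant ρ χ T)
    (hμ : T.HasEigenvalue μ) (hμ_ne : μ ≠ 0) : Finite χ.range := by
  have h_eigenvalue (c : χ.range) : T.HasEigenvalue ((c : Kˣ) * μ) := by
    obtain ⟨_, g, rfl⟩ := c
    exact hT.hasEigenvalue_mul hμ g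
  let f (c : χ.range) : T.Eigenvalues := ⟨(c : Kˣ) * μ, h_eigenvalue c⟩
  exact .of_injective f fun c d h =>
    Subtype.ext (Units.ext (mul_right_cancel₀ hμ_ne (congrArg Subtype.val h)))

theorem finrank_eq_index_ker_mul [FiniteDimensional K V] (hT : IsSemiInvariant ρ χ T)
    (hρ : ρ.IsIrreducibleRep) (hμ : T.HasEigenvalue μ) (hμ_ne : μ ≠ 0) :
    finrank K V = χ.ker.index * finrank K (T.eigenspace μ) := by
  classical
  have h_int := hT.isInternal_eigenspace hρ hμ hμ_ne
  have := hT.finite_range hμ hμ_ne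
  have := Fintype.ofFinite χ.range
  have h_dim (c : χ.range) :
      finrank K (T.eigenspace ((c : Kˣ) * μ)) = finrank K (T.eigenspace μ) := by
    obtain ⟨_, g, rfl⟩ := c
    exact hT.finrank_eigenspace_mul g μ
  rw [← (LinearEquiv.ofBijective (DirectSum.coeLinearMap _) h_int).finrank_eq, finrank_directSum,
    Finset.sum_congr rfl fun c _ => h_dim c, Finset.sum_const, Finset.card_univ, smul_eq_mul,
    Subgroup.index_ker, Nat.card_eq_fintype_card]

theorem iSup_map_le_sup_iSup_eigenspace (hT : IsSemiInvariant ρ χ T) (hμ_ne : μ ≠ 0)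
    {U : Submodule K V} (hUT : U ≤ T.eigenspace μ) (hU : ∀ g ∈ χ.ker, U.map (ρ g) ≤ U) :
    ⨆ g, U.map (ρ g) ≤ U ⊔ ⨆ ν ≠ μ, T.eigenspace ν := by
  refine iSup_le fun g => ?_
  by_cases hg : g ∈ χ.ker
  · exact le_sup_of_le_left (hU g hg)
  · have h_ne : (χ g : K) * μ ≠ μ := by simpa [hμ_ne, χ.mem_ker] using hg
    exact le_sup_of_le_right <| (Submodule.map_mono hUT).trans <|
      (hT.map_eigenspace_le g μ).trans <| le_iSup₂_of_le _ h_ne le_rfl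

theorem eq_bot_or_eq_eigenspace (hT : IsSemiInvariant ρ χ T) (hρ : ρ.IsIrreducibleRep)
    (hμ_ne : μ ≠ 0) {U : Submodule K V} (hUT : U ≤ T.eigenspace μ)
    (hU : ∀ g ∈ χ.ker, U.map (ρ g) ≤ U) : U = ⊥ ∨ U = T.eigenspace μ := by
  refine or_iff_not_imp_left.2 fun hU_ne => ?_
  have h_top : U ⊔ ⨆ ν ≠ μ, T.eigenspace ν = ⊤ := by
    rw [eq_top_iff, ← iSup_map_eq_top_of_isIrreducibleRep hρ hU_ne]
    exact hT.iSup_map_le_sup_iSup_eigenspace hμ_ne hUT hU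
  calc U = U ⊔ (⨆ ν ≠ μ, T.eigenspace ν) ⊓ T.eigenspace μ := by
        rw [(T.eigenspaces_iSupIndep μ).symm.eq_bot, sup_bot_eq]
    _ = (U ⊔ ⨆ ν ≠ μ, T.eigenspace ν) ⊓ T.eigenspace μ := sup_inf_assoc_of_le _ hUT |>.symm
    _ = T.eigenspace μ := by rw [h_top, top_inf_eq]

theorem isIrreducibleRep_eigenspaceRep (hT : IsSemiInvariant ρ χ T) (hρ : ρ.IsIrreducibleRep)
    (hμ : T.HasEigenvalue μ) (hμ_ne : μ ≠ 0) : (hT.eigenspaceRep μ).IsIrreducibleRep := by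
  refine ⟨Submodule.nontrivial_iff_ne_bot.2 hμ, fun W hW => ?_⟩
  have hW_map (g : G) (hg : g ∈ χ.ker) :
      (W.map (T.eigenspace μ).subtype).map (ρ g) ≤ W.map (T.eigenspace μ).subtype := by
    rintro _ ⟨_, ⟨w, hw, rfl⟩, rfl⟩
    exact ⟨_, hW ⟨g, hg⟩ ⟨w, hw, rfl⟩, rfl⟩
  have h_inj := Submodule.map_injective_of_injective (T.eigenspace μ).subtype_injective
  refine (hT.eq_bot_or_eq_eigenspace hρ hμ_ne (Submodule.map_subtype_le _ W) hW_map).imp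
    (fun h => h_inj ?_) (fun h => h_inj ?_)
  · rw [h, Submodule.map_bot]
  · rw [h, Submodule.map_subtype_top]

end IsSemiInvariant

end Field

section Nilpotent

variable {K G V : Type*} [Field K] [IsAlgClosed K] [Group G] [AddCommGroup V] [Module K V]
  [FiniteDimensional K V] {ρ : Representation K G V}

theorem exists_isSemiInvariant_hasEigenvalue [Group.IsNilpotent G] [Nontrivial V]
    (h : scalarSubgroup ρ ≠ ⊤) :
    ∃ (χ : G →* Kˣ) (T : End K V) (μ : K), IsSemiInvariant ρ χ T ∧ T.HasEigenvalue μ ∧ μ ≠ 0 ∧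
      T.eigenspace μ ≠ ⊤ := by
  obtain ⟨a, ha, ha_comm⟩ := exists_notMem_forall_commutatorElement_mem h
  obtain ⟨χ, hχ⟩ := exists_isSemiInvariant_of_commutatorElement_mem ha_comm
  obtain ⟨μ, hμ⟩ := End.exists_eigenvalue (ρ a)
  have hμ_ne : μ ≠ 0 := spectrum.ne_zero_of_mem_of_unit (a := ρ.asGroupHom a) hμ.mem_spectrum
  refine ⟨χ, ρ a, μ, hχ, hμ, hμ_ne, fun h_top => ha ?_⟩
  refine mem_scalarSubgroup_iff.2 ⟨Units.mk0 μ hμ_ne, LinearMap.ext fun v => ?_⟩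
  exact (End.mem_eigenspace_iff.1 (h_top ▸ Submodule.mem_top : v ∈ End.eigenspace (ρ a) μ)).symm

theorem exists_subgroup_index_eq_finrank [Group.IsNilpotent G] (hρ : ρ.IsIrreducibleRep) :
    ∃ H : Subgroup G, H.index = finrank K V := by
  induction hn : finrank K V using Nat.strong_induction_on generalizing G V with
  | _ n ih =>
  subst hn
  have := hρ.1
  by_cases h : scalarSubgroup ρ = ⊤
  · exact ⟨⊤, by rw [Subgroup.index_top, finrank_eq_one_of_scalarSubgroup_eq_top hρ h]⟩
  obtain ⟨χ, T, μ, hT, hμ, hμ_ne, h_ne_top⟩ := exists_isSemiInvariant_hasEigenvalue h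
  obtain ⟨H, hH⟩ := ih _ (Submodule.finrank_lt h_ne_top)
    (hT.isIrreducibleRep_eigenspaceRep hρ hμ hμ_ne) rfl
  refine ⟨H.map χ.ker.subtype, ?_⟩
  rw [Subgroup.index_map_subtype, hH, hT.finrank_eq_index_ker_mul hρ hμ hμ_ne, mul_comm]

end Nilpotent

theorem finrank_irreducible_rep_isPGroup_eq_pow_general {p : ℕ} (hp : p.Prime)
    {K : Type*} [Field K] [IsAlgClosed K] {G : Type*} [Group G] [Group.IsNilpotent G]
    (hG : IsPGroup p G) {V : Type*} [AddCommGroup V] [Module K V] [FiniteDimensional K V]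
    {ρ : Representation K G V} (hρ : ρ.IsIrreducibleRep) : ∃ j : ℕ, finrank K V = p ^ j := by
  have := Fact.mk hp
  have := hρ.1
  obtain ⟨H, hH⟩ := exists_subgroup_index_eq_finrank hρ
  have : H.FiniteIndex := ⟨hH ▸ finrank_pos.ne'⟩
  exact hH ▸ hG.index H

/-- Every irreducible representation of a finite `p`-group over an algebraically
closed field of characteristic `≠ p` has dimension a power of `p`. -/
theorem finrank_irreducible_rep_isPGroup_eq_pow (p : ℕ) (hp : p.Prime)
    (K : Type*) [Field K] [IsAlgClosed K] (hchar : ringChar K ≠ p)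
    (G : Type*) [Group G] [Finite G] (hG : IsPGroup p G)
    (V : Type*) [AddCommGroup V] [Module K V] [FiniteDimensional K V]
    (ρ : Representation K G V) (hirr : ρ.IsIrreducibleRep) :
    ∃ j : ℕ, Module.finrank K V = p ^ j := by
  have := Fact.mk hp
  have := hG.isNilpotent
  exact finrank_irreducible_rep_isPGroup_eq_pow_general hp hG hirr
end

section
/- Let p be a prime and G a finite p-group. The dimension of every irreducible representation of G on a finite-dimensional rational vector space V divides (p−1)p^j for some j ∈ ℕ, i.e. there exists j ∈ ℕ with dim_ℚ V ∣ (p−1)·p^j. -/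
/-!
If some `ρ g` is not the identity, a central element of order `p` in the image of `ρ` generates,
by Schur's lemma, a field `L ⊇ k` of endomorphisms commuting with `ρ`; it is the `p`-th cyclotomic
extension of `k`, so `[L : k] ∣ p - 1`, and `V` is an irreducible representation over `L`.

It remains to see that over a field `L` with a primitive `p`-th root of unity the dimension of `V`
divides `|G|`. By induction it suffices that, for a surjection `π : G → Q` with `|Q| = p` and an
irreducible subrepresentation `U` of `ker π`, the dimension of `V` divides `|Q| * dim U`. This is
the dimension of the representation of `G` induced from `U`, realized inside the functions
`Q → V`. The Fourier coefficient at a character `χ` of `Q` intertwines it with the irreducible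
representation `χ ⊗ ρ`, of dimension `dim V`, and a function with vanishing Fourier coefficients is
zero; hence the induced representation has a filtration all of whose factors have dimension `0` or
`dim V`.
-/

open Module Representation

section Irreducible

variable {k G V : Type*} [Field k] [Monoid G] [AddCommGroup V] [Module k V]

lemma isIrreducible_iff_isIrreducibleRep (ρ : Representation k G V) :
    ρ.IsIrreducible ↔ ρ.IsIrreducibleRep := by
  constructor
  · intro h
    refine ⟨?_, fun W hW ↦ ?_⟩
    · by_contra hV
      rw [not_nontrivial_iff_subsingleton] at hV
      exact bot_ne_top (α := Subrepresentation ρ)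
        (Subrepresentation.toSubmodule_injective (Subsingleton.elim _ _))
    · let U : Subrepresentation ρ := ⟨W, fun g v hv ↦ hW g (Submodule.mem_map_of_mem hv)⟩
      exact (eq_bot_or_eq_top U).imp (congrArg Subrepresentation.toSubmodule)
        (congrArg Subrepresentation.toSubmodule)
  · rintro ⟨hV, h⟩
    refine { exists_pair_ne := ⟨⊥, ⊤, fun hbt ↦ ?_⟩, eq_bot_or_eq_top := fun U ↦ ?_ }
    · exact bot_ne_top (α := Submodule k V) (congrArg Subrepresentation.toSubmodule hbt)
    · have hU (g : G) : U.toSubmodule.map (ρ g) ≤ U.toSubmodule :=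
        Submodule.map_le_iff_le_comap.2 (U.apply_mem_toSubmodule g)
      exact (h U.toSubmodule hU).imp (fun h ↦ Subrepresentation.toSubmodule_injective h)
        (fun h ↦ Subrepresentation.toSubmodule_injective h)

lemma finite_of_isIrreducible [Finite G] (ρ : Representation k G V) [ρ.IsIrreducible] :
    Module.Finite k V :=
  have : Module.Finite k (MonoidAlgebra k G) := inferInstance
  have : Module.Finite k ρ.asModule := Module.Finite.trans (MonoidAlgebra k G) ρ.asModule
  Module.Finite.equiv ρ.asModuleEquiv

lemma finrank_eq_one_of_forall_apply_eq_one (ρ : Representation k G V) [ρ.IsIrreducible]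
    (h : ∀ g, ρ g = 1) : finrank k V = 1 := by
  obtain ⟨_, hbt⟩ := (isIrreducible_iff_isIrreducibleRep ρ).1 ‹_›
  have hsimple : IsSimpleModule k V :=
    { eq_bot_or_eq_top := fun W ↦ hbt W fun g ↦ by simp [h g, Module.End.one_eq_id] }
  exact isSimpleModule_iff_finrank_eq_one.1 hsimple

lemma isIrreducible_toRepresentation_of_isAtom {ρ : Representation k G V}
    {U : Subrepresentation ρ} (hU : IsAtom U) : U.toRepresentation.IsIrreducible := by
  refine (isIrreducible_iff_isIrreducibleRep _).2 ⟨?_, fun W hW ↦ ?_⟩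
  · rw [Submodule.nontrivial_iff_ne_bot]
    exact fun h ↦ hU.1 (Subrepresentation.toSubmodule_injective h)
  · let W' : Subrepresentation ρ := ⟨W.map U.toSubmodule.subtype, by
      rintro g _ ⟨w, hw, rfl⟩
      exact ⟨_, hW g (Submodule.mem_map_of_mem hw), rfl⟩⟩
    have hWU : W' ≤ U := Submodule.map_subtype_le U.toSubmodule W
    have hinj := Submodule.map_injective_of_injective U.toSubmodule.injective_subtype
    rcases hU.le_iff.1 hWU with h | h
    · refine .inl (hinj ?_)
      rw [Submodule.map_bot]
      exact congr(($h).toSubmodule)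
    · refine .inr (hinj ?_)
      rw [Submodule.map_subtype_top]
      exact congr(($h).toSubmodule)

lemma exists_isIrreducible_toRepresentation [FiniteDimensional k V] [Nontrivial V]
    (ρ : Representation k G V) : ∃ U : Subrepresentation ρ, U.toRepresentation.IsIrreducible := by
  have : WellFoundedLT (Subrepresentation ρ) :=
    StrictMono.wellFoundedLT (f := Subrepresentation.toSubmodule) fun _ _ h ↦ h
  have : IsAtomic (Subrepresentation ρ) := isAtomic_of_orderBot_wellFounded_lt wellFounded_lt
  have htop : (⊤ : Subrepresentation ρ) ≠ ⊥ := fun h ↦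
    top_ne_bot (α := Submodule k V) congr(($h).toSubmodule)
  obtain ⟨U, hU, -⟩ := (eq_bot_or_exists_atom_le (⊤ : Subrepresentation ρ)).resolve_left htop
  exact ⟨U, isIrreducible_toRepresentation_of_isAtom hU⟩

lemma injective_of_forall_commute (ρ : Representation k G V) [ρ.IsIrreducible] {T : End k V}
    (hT : ∀ g, Commute (ρ g) T) (hT0 : T ≠ 0) : Function.Injective T := by
  let f : IntertwiningMap ρ ρ := LinearMap.intertwiningMap_of_isIntertwiningMap ρ ρ T
    fun g v ↦ (LinearMap.congr_fun (hT g) v).symm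
  exact (IsIrreducible.injective_or_eq_zero f).resolve_right
    fun h ↦ hT0 congr(($h).toLinearMap)

open scoped IsMulCommutative in
lemma isField_of_forall_commute [FiniteDimensional k V] (ρ : Representation k G V)
    [ρ.IsIrreducible] (S : Subalgebra k (End k V)) [IsMulCommutative S]
    (hS : ∀ a ∈ S, ∀ g, Commute (ρ g) a) : IsField S := by
  have : Nontrivial V := ((isIrreducible_iff_isIrreducibleRep ρ).1 ‹_›).1
  have : NoZeroDivisors S := ⟨fun {a b} hab ↦ by
    refine or_iff_not_imp_left.2 fun ha ↦ Subtype.ext (LinearMap.ext fun v ↦ ?_)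
    refine injective_of_forall_commute ρ (hS a a.2) (fun h ↦ ha (Subtype.ext h)) ?_
    simpa using LinearMap.congr_fun congr(($hab : End k V)) v⟩
  have : IsDomain S := NoZeroDivisors.to_isDomain _
  exact isField_of_isIntegral_of_isField' (Field.toIsField k)

lemma dvd_finrank_of_jointly_injective {E ι : Type*} {W : ι → Type*} [AddCommGroup E]
    [Module k E] [FiniteDimensional k E] [∀ i, AddCommGroup (W i)] [∀ i, Module k (W i)]
    {σ : Representation k G E} {τ : ∀ i, Representation k G (W i)} [∀ i, (τ i).IsIrreducible]
    (φ : ∀ i, IntertwiningMap σ (τ i)) (s : Finset ι) (hφ : ∀ x, (∀ i ∈ s, φ i x = 0) → x = 0)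
    {d : ℕ} (hd : ∀ i ∈ s, d ∣ finrank k (W i)) : d ∣ finrank k E := by
  classical
  induction s using Finset.induction_on generalizing E with
  | empty =>
    have : Subsingleton E := ⟨fun x y ↦ (hφ x (by simp)).trans (hφ y (by simp)).symm⟩
    simp [finrank_zero_of_subsingleton]
  | insert i s _ ih =>
    let N := (φ i).ker
    let incl : IntertwiningMap N.toRepresentation σ := ⟨N.toSubmodule.subtype, fun _ ↦ rfl⟩
    have hker : d ∣ finrank k N.toSubmodule := by
      refine ih (fun j ↦ (φ j).comp incl) (fun x hx ↦ Subtype.ext (hφ x ?_)) fun j hj ↦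
        hd j (Finset.mem_insert_of_mem hj)
      rw [Finset.forall_mem_insert]
      exact ⟨x.2, hx⟩
    have hrange : d ∣ finrank k (LinearMap.range (φ i).toLinearMap) := by
      rcases IsIrreducible.surjective_or_eq_zero (φ i) with h | h
      · rw [LinearMap.range_eq_top.2 h, finrank_top]
        exact hd i (Finset.mem_insert_self i s)
      · have h0 : (φ i).toLinearMap = 0 := congr(($h).toLinearMap)
        rw [h0, LinearMap.range_zero, finrank_bot]
        exact dvd_zero d
    rw [← (φ i).toLinearMap.finrank_range_add_finrank_ker]
    exact dvd_add hrange hker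

end Irreducible

section Fourier

variable {K Q V : Type*} [Field K] [AddCommGroup V] [Module K V] [CommGroup Q]
  [HasEnoughRootsOfUnity K (Monoid.exponent Q)]

lemma span_range_monoidHom_units_eq_top [Finite Q] :
    Submodule.span K (Set.range fun (χ : Q →* Kˣ) (x : Q) ↦ (χ x : K)) = ⊤ := by
  have := Fintype.ofFinite Q
  have := Fintype.ofFinite (Q →* Kˣ)
  have hli : LinearIndependent K fun (χ : Q →* Kˣ) (x : Q) ↦ (χ x : K) :=
    (linearIndependent_monoidHom Q K).comp (fun χ : Q →* Kˣ ↦ (Units.coeHom K).comp χ)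
      fun χ ψ h ↦ MonoidHom.ext fun x ↦ Units.ext (DFunLike.congr_fun h x)
  refine hli.span_eq_top_of_card_eq_finrank' ?_
  rw [finrank_fintype_fun_eq_card, ← Nat.card_eq_fintype_card, ← Nat.card_eq_fintype_card,
    CommGroup.card_monoidHom_of_hasEnoughRootsOfUnity]

lemma eq_zero_of_forall_sum_monoidHom_smul_eq_zero [Fintype Q] {f : Q → V}
    (hf : ∀ χ : Q →* Kˣ, ∑ x, (χ x : K) • f x = 0) : f = 0 := by
  classical
  have h : Fintype.linearCombination K f = 0 :=
    LinearMap.ext_on_range span_range_monoidHom_units_eq_top fun χ ↦ by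
      simpa [Fintype.linearCombination_apply] using hf χ
  funext x
  simpa using LinearMap.congr_fun h (Pi.single x 1)

end Fourier

section Induced

variable {K G Q V : Type*} [Field K] [Group G] [Group Q] [AddCommGroup V] [Module K V]

/-- The tensor product of `ρ` with the one-dimensional representation `χ`, on the space of `ρ`. -/
def twist (ρ : Representation K G V) (χ : G →* Kˣ) : Representation K G V where
  toFun g := (χ g : K) • ρ g
  map_one' := by simp
  map_mul' g h := by simp only [map_mul, Units.val_mul, smul_mul_smul_comm]

instance isIrreducible_twist (ρ : Representation K G V) [ρ.IsIrreducible] (χ : G →* Kˣ) :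
    (twist ρ χ).IsIrreducible := by
  obtain ⟨hV, hρ⟩ := (isIrreducible_iff_isIrreducibleRep ρ).1 ‹_›
  refine (isIrreducible_iff_isIrreducibleRep _).2 ⟨hV, fun W hW ↦ hρ W fun g ↦ ?_⟩
  simpa [twist, Submodule.map_smul] using hW g

/-- The representation of `G` on functions `Q → V` in which `g` acts by translation by `π g` on
`Q` and by `ρ g` on values. -/
def funRep (π : G →* Q) (ρ : Representation K G V) : Representation K G (Q → V) where
  toFun g := LinearMap.pi fun x ↦ ρ g ∘ₗ LinearMap.proj ((π g)⁻¹ * x)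
  map_one' := by ext; simp
  map_mul' g h := by ext; simp [mul_assoc]

lemma funRep_apply (π : G →* Q) (ρ : Representation K G V) (g : G) (f : Q → V) (x : Q) :
    funRep π ρ g f x = ρ g (f ((π g)⁻¹ * x)) := rfl

/-- The representation of `G` induced from a subrepresentation `U` of the restriction of `ρ` to
`ker π`, for surjective `π`: it is realized as the space of functions on `Q = G / ker π` whose
value at the coset `π g` lies in `ρ g U`. -/
def inducedSubrep (π : G →* Q) {ρ : Representation K G V}
    (U : Subrepresentation (ρ.comp π.ker.subtype)) : Subrepresentation (funRep π ρ) where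
  toSubmodule := ⨅ g, (U.toSubmodule.map (ρ g)).comap (LinearMap.proj (π g))
  apply_mem_toSubmodule h f hf := by
    simp only [Submodule.mem_iInf, Submodule.mem_comap] at hf ⊢
    intro g
    obtain ⟨u, hu, hfu⟩ := hf (h⁻¹ * g)
    refine ⟨u, hu, ?_⟩
    simp only [map_mul, map_inv, LinearMap.proj_apply] at hfu ⊢
    simp [funRep_apply, ← hfu]

lemma finrank_inducedSubrep [Finite Q] [FiniteDimensional K V] {π : G →* Q}
    (hπ : Function.Surjective π) {ρ : Representation K G V}
    (U : Subrepresentation (ρ.comp π.ker.subtype)) :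
    finrank K (inducedSubrep π U).toSubmodule = Nat.card Q * finrank K U.toSubmodule := by
  have := Fintype.ofFinite Q
  let s := Function.surjInv hπ
  have hs : ∀ x, π (s x) = x := Function.surjInv_eq hπ
  let Φ : (Q → U.toSubmodule) →ₗ[K] (Q → V) :=
    LinearMap.pi fun x ↦ ρ (s x) ∘ₗ U.toSubmodule.subtype ∘ₗ LinearMap.proj x
  have hinj : Function.Injective Φ := fun u v huv ↦ funext fun x ↦
    Subtype.ext ((ρ.apply_bijective (s x)).1 (congrFun huv x))
  have hrange : LinearMap.range Φ = (inducedSubrep π U).toSubmodule := by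
    ext f
    simp only [inducedSubrep, Submodule.mem_iInf, Submodule.mem_comap]
    constructor
    · rintro ⟨u, rfl⟩ g
      have hker : g⁻¹ * s (π g) ∈ π.ker := by simp [MonoidHom.mem_ker, hs]
      refine ⟨ρ (g⁻¹ * s (π g)) (u (π g)), U.apply_mem_toSubmodule ⟨_, hker⟩ (u (π g)).2, ?_⟩
      simp [Φ]
    · intro hf
      choose u hu hfu using fun x ↦ hf (s x)
      refine ⟨fun x ↦ ⟨u x, hu x⟩, funext fun x ↦ ?_⟩
      simpa [Φ, hs] using hfu x
  rw [← hrange, LinearMap.finrank_range_of_inj hinj, finrank_pi_fintype, Finset.sum_const,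
    Finset.card_univ, Nat.card_eq_fintype_card, smul_eq_mul]

/-- The Fourier coefficient at `χ` of functions `Q → V`. -/
def fourierMap [Fintype Q] (π : G →* Q) (ρ : Representation K G V) (χ : Q →* Kˣ) :
    IntertwiningMap (funRep π ρ) (twist ρ (χ.comp π)) where
  toLinearMap := ∑ x, (χ x : K) • LinearMap.proj x
  isIntertwining' g := by
    refine LinearMap.ext fun f ↦ ?_
    simp only [twist, MonoidHom.coe_mk, OneHom.coe_mk, LinearMap.comp_apply, LinearMap.sum_apply,
      LinearMap.smul_apply, LinearMap.proj_apply, funRep_apply, map_sum, map_smul,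
      MonoidHom.comp_apply]
    rw [← Equiv.sum_comp (Equiv.mulLeft (π g))]
    refine Finset.sum_congr rfl fun x _ ↦ ?_
    simp [mul_smul, smul_comm (χ x : K)]

lemma fourierMap_apply [Fintype Q] (π : G →* Q) (ρ : Representation K G V) (χ : Q →* Kˣ)
    (f : Q → V) : fourierMap π ρ χ f = ∑ x, (χ x : K) • f x := by
  change (∑ x, (χ x : K) • LinearMap.proj x : (Q → V) →ₗ[K] V) f = _
  simp

lemma finrank_dvd_card_mul_finrank {Q : Type*} [CommGroup Q] [Finite Q]
    [HasEnoughRootsOfUnity K (Monoid.exponent Q)] [FiniteDimensional K V]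
    (ρ : Representation K G V) [ρ.IsIrreducible] {π : G →* Q} (hπ : Function.Surjective π)
    (U : Subrepresentation (ρ.comp π.ker.subtype)) :
    finrank K V ∣ Nat.card Q * finrank K U.toSubmodule := by
  have := Fintype.ofFinite Q
  have := Fintype.ofFinite (Q →* Kˣ)
  let N := inducedSubrep π U
  let incl : IntertwiningMap N.toRepresentation (funRep π ρ) :=
    ⟨N.toSubmodule.subtype, fun _ ↦ rfl⟩
  rw [← finrank_inducedSubrep hπ]
  refine dvd_finrank_of_jointly_injective (fun χ ↦ (fourierMap π ρ χ).comp incl) Finset.univ ?_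
    fun _ _ ↦ dvd_rfl
  intro f hf
  refine Subtype.ext (eq_zero_of_forall_sum_monoidHom_smul_eq_zero (K := K) fun χ ↦ ?_)
  rw [← fourierMap_apply π ρ χ]
  exact hf χ (Finset.mem_univ χ)

end Induced

section PGroup

variable {p : ℕ} [Fact p.Prime] {G : Type*} [Group G] [Finite G]

lemma exists_surjective_monoidHom_zmod (hG : IsPGroup p G) [Nontrivial G] :
    ∃ π : G →* Multiplicative (ZMod p), Function.Surjective π := by
  have hp : p.Prime := Fact.out
  obtain ⟨n, hn, hcard⟩ := hG.nontrivial_iff_card.1 ‹_›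
  obtain ⟨m, rfl⟩ := Nat.exists_eq_add_of_lt hn
  rw [zero_add] at hcard
  obtain ⟨H, hH⟩ := Sylow.exists_subgroup_card_pow_prime p (G := G) (n := m)
    (hcard ▸ pow_dvd_pow p m.le_succ)
  have hindex : H.index = p := by
    have hmul := H.card_mul_index
    rw [hH, hcard, pow_succ] at hmul
    exact Nat.eq_of_mul_eq_mul_left (pow_pos hp.pos m) hmul
  have : H.Normal := by
    apply Subgroup.normal_of_index_eq_minFac_card
    rw [hindex, hcard, hp.pow_minFac m.succ_ne_zero]
  let e : G ⧸ H ≃* Multiplicative (ZMod p) := mulEquivOfPrimeCardEq (p := p) hindex (by simp)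
  exact ⟨e.toMonoidHom.comp (QuotientGroup.mk' H),
    e.surjective.comp (QuotientGroup.mk'_surjective H)⟩

lemma exists_mem_center_orderOf_eq (hG : IsPGroup p G) [Nontrivial G] :
    ∃ z ∈ Subgroup.center G, orderOf z = p := by
  have hcenter : IsPGroup p (Subgroup.center G) := hG.to_subgroup _
  obtain ⟨n, hn, hcard⟩ := hcenter.nontrivial_iff_card.1 hG.center_nontrivial
  obtain ⟨z, hz⟩ := exists_prime_orderOf_dvd_card' (G := Subgroup.center G) p
    (hcard ▸ dvd_pow_self p hn.ne')
  exact ⟨z, z.2, by rw [Subgroup.orderOf_coe, hz]⟩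

lemma exists_forall_commute_pow_eq_one {M : Type*} [Monoid M] (hG : IsPGroup p G) {f : G →* M}
    (hf : ∃ g, f g ≠ 1) : ∃ t : M, t ≠ 1 ∧ t ^ p = 1 ∧ ∀ g, Commute (f g) t := by
  let F := f.toHomUnits
  have hrange : IsPGroup p F.range := hG.of_surjective F.rangeRestrict F.rangeRestrict_surjective
  have : Finite F.range := .of_surjective _ F.rangeRestrict_surjective
  have : Nontrivial F.range := by
    obtain ⟨g, hg⟩ := hf
    refine ⟨⟨F g, g, rfl⟩, 1, fun h ↦ hg ?_⟩
    exact congr((($h : Mˣ) : M))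
  obtain ⟨z, hz, hzp⟩ := exists_mem_center_orderOf_eq hrange
  refine ⟨(z : Mˣ), fun h ↦ ?_, ?_, fun g ↦ ?_⟩
  · have hz1 : z = 1 := Subtype.ext (Units.ext h)
    exact (Fact.out : p.Prime).ne_one (by rw [← hzp, hz1, orderOf_one])
  · exact congr((($(orderOf_dvd_iff_pow_eq_one.1 hzp.dvd) : Mˣ) : M))
  · exact congr((($(Subgroup.mem_center_iff.1 hz ⟨F g, g, rfl⟩) : Mˣ) : M))

lemma finrank_dvd_card_of_isPGroup {K V : Type*} [Field K] [HasEnoughRootsOfUnity K p]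
    [AddCommGroup V] [Module K V] (hG : IsPGroup p G) (ρ : Representation K G V)
    [ρ.IsIrreducible] : finrank K V ∣ Nat.card G := by
  induction hn : Nat.card G using Nat.strong_induction_on generalizing G V with
  | h n ih =>
  have := finite_of_isIrreducible ρ
  rcases subsingleton_or_nontrivial G with hG1 | hG1
  · rw [finrank_eq_one_of_forall_apply_eq_one ρ fun g ↦ by rw [Subsingleton.elim g 1, map_one]]
    exact one_dvd n
  obtain ⟨π, hπ⟩ := exists_surjective_monoidHom_zmod hG
  have hcard : p * Nat.card π.ker = n := by
    have hindex : π.ker.index = p := by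
      rw [Subgroup.index_ker, MonoidHom.range_eq_top.2 hπ]
      simp
    rw [← hn, ← π.ker.card_mul_index, hindex, mul_comm]
  have : HasEnoughRootsOfUnity K (Monoid.exponent (Multiplicative (ZMod p))) :=
    .of_dvd K (n := p) (by simp)
  have : Nontrivial V := ((isIrreducible_iff_isIrreducibleRep ρ).1 ‹_›).1
  obtain ⟨U, hU⟩ := exists_isIrreducible_toRepresentation (ρ.comp π.ker.subtype)
  have hUdvd : finrank K U.toSubmodule ∣ Nat.card π.ker := by
    refine ih _ ?_ (hG.to_subgroup π.ker) U.toRepresentation rfl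
    rw [← hcard]
    exact lt_mul_of_one_lt_left Nat.card_pos (Fact.out : p.Prime).one_lt
  rw [← hcard]
  refine (finrank_dvd_card_mul_finrank ρ hπ U).trans ?_
  rw [Nat.card_eq_of_bijective _ Multiplicative.toAdd.bijective, Nat.card_zmod]
  exact mul_dvd_mul_left p hUdvd

end PGroup

section Extension

lemma finrank_dvd_totient_of_isCyclotomicExtension (n : ℕ) [NeZero n] (k L : Type*) [Field k]
    [Field L] [Algebra k L] [IsCyclotomicExtension {n} k L] : finrank k L ∣ n.totient := by
  have := IsCyclotomicExtension.isGalois {n} k L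
  have := IsCyclotomicExtension.finiteDimensional {n} k L
  rw [← IsGalois.card_aut_eq_finrank, ← ZMod.card_units_eq_totient, ← Nat.card_eq_fintype_card]
  exact Subgroup.card_dvd_of_injective _
    ((IsCyclotomicExtension.zeta_spec n k L).autToPow_injective k)

variable {k G V : Type*} [Field k] [Group G] [AddCommGroup V] [Module k V]

/-- The representation `ρ`, regarded as linear over scalars `L` with which it commutes. -/
def extendScalars (L : Type*) [CommSemiring L] [Module L V] (ρ : Representation k G V)
    (hρ : ∀ g (a : L) v, ρ g (a • v) = a • ρ g v) : Representation L G V where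
  toFun g := { ρ g with map_smul' := hρ g }
  map_one' := by ext; simp
  map_mul' g h := by ext; simp

lemma isIrreducible_extendScalars {L : Type*} [Field L] [Algebra k L] [Module L V]
    [IsScalarTower k L V] (ρ : Representation k G V) [ρ.IsIrreducible]
    (hρ : ∀ g (a : L) v, ρ g (a • v) = a • ρ g v) : (extendScalars L ρ hρ).IsIrreducible := by
  obtain ⟨hV, h⟩ := (isIrreducible_iff_isIrreducibleRep ρ).1 ‹_›
  refine (isIrreducible_iff_isIrreducibleRep _).2 ⟨hV, fun W hW ↦ ?_⟩
  exact (h (W.restrictScalars k) hW).imp (Submodule.restrictScalars_eq_bot_iff k L V).1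
    (Submodule.restrictScalars_eq_top_iff k L V).1

lemma finrank_dvd_of_isCyclotomicExtension {p : ℕ} [Fact p.Prime] [Finite G] (hG : IsPGroup p G)
    {L : Type*} [Field L] [Algebra k L] [IsCyclotomicExtension {p} k L] [Module L V]
    [IsScalarTower k L V] (ρ : Representation k G V) [ρ.IsIrreducible]
    (hρ : ∀ g (a : L) v, ρ g (a • v) = a • ρ g v) : finrank k V ∣ (p - 1) * Nat.card G := by
  have := isIrreducible_extendScalars ρ hρ
  have : HasEnoughRootsOfUnity L p :=
    ⟨⟨_, IsCyclotomicExtension.zeta_spec p k L⟩, rootsOfUnity.isCyclic L p⟩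
  rw [← finrank_mul_finrank k L V, ← Nat.totient_prime (Fact.out : p.Prime)]
  exact mul_dvd_mul (finrank_dvd_totient_of_isCyclotomicExtension p k L)
    (finrank_dvd_card_of_isPGroup hG (extendScalars L ρ hρ))

lemma isCyclotomicExtension_of_adjoin_eq_top {p : ℕ} [Fact p.Prime] {A B : Type*} [CommRing A]
    [CommRing B] [Algebra A B] {ζ : B} (hζ : ζ ≠ 1) (hp : ζ ^ p = 1)
    (h : Algebra.adjoin A {ζ} = ⊤) : IsCyclotomicExtension {p} A B := by
  refine (IsCyclotomicExtension.iff_adjoin_eq_top _ _ _).2 ⟨?_, top_unique (h.ge.trans ?_)⟩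
  · rintro _ rfl -
    exact ⟨ζ, orderOf_eq_prime hp hζ ▸ IsPrimitiveRoot.orderOf ζ⟩
  · exact Algebra.adjoin_mono (Set.singleton_subset_iff.2 ⟨p, rfl, NeZero.ne p, hp⟩)

open scoped IsMulCommutative in
lemma finrank_dvd_of_commute_of_pow_eq_one {p : ℕ} [Fact p.Prime] [Finite G] (hG : IsPGroup p G)
    (ρ : Representation k G V) [ρ.IsIrreducible] {T : End k V} (hT : T ≠ 1) (hTp : T ^ p = 1)
    (hcomm : ∀ g, Commute (ρ g) T) : finrank k V ∣ (p - 1) * Nat.card G := by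
  have := finite_of_isIrreducible ρ
  have hS (a) (ha : a ∈ Algebra.adjoin k {T}) (g : G) : Commute (ρ g) a :=
    Algebra.commute_of_mem_adjoin_singleton_of_commute ha (hcomm g)
  let := (isField_of_forall_commute ρ (Algebra.adjoin k {T}) hS).toField
  let ζ : Algebra.adjoin k {T} := ⟨T, Algebra.self_mem_adjoin_singleton k T⟩
  have hζ : Algebra.adjoin k {ζ} = ⊤ := by
    convert Algebra.adjoin_adjoin_coe_preimage (R := k) (s := {T})
    ext; simp [ζ, Subtype.ext_iff]
  have : IsCyclotomicExtension {p} k (Algebra.adjoin k {T}) :=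
    isCyclotomicExtension_of_adjoin_eq_top (fun h ↦ hT (congrArg Subtype.val h))
      (Subtype.ext hTp) hζ
  exact finrank_dvd_of_isCyclotomicExtension (L := Algebra.adjoin k {T}) hG ρ
    fun g a v ↦ LinearMap.congr_fun (hS a a.2 g) v

end Extension

theorem finrank_irreducible_rep_isPGroup_dvd_rat_general {p : ℕ} (hp : p.Prime) {k G V : Type*}
    [Field k] [Group G] [Finite G] (hG : IsPGroup p G) [AddCommGroup V] [Module k V]
    (ρ : Representation k G V) (hirr : ρ.IsIrreducibleRep) :
    finrank k V ∣ (p - 1) * Nat.card G := by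
  have := Fact.mk hp
  have := (isIrreducible_iff_isIrreducibleRep ρ).2 hirr
  by_cases hρ : ∀ g, ρ g = 1
  · rw [finrank_eq_one_of_forall_apply_eq_one ρ hρ]
    exact one_dvd _
  · obtain ⟨T, hT, hTp, hcomm⟩ := exists_forall_commute_pow_eq_one hG (not_forall.1 hρ)
    exact finrank_dvd_of_commute_of_pow_eq_one hG ρ hT hTp hcomm

/-- The dimension of every irreducible rational representation of a finite
`p`-group divides `(p-1)·p^j` for some `j`. -/
theorem finrank_irreducible_rep_isPGroup_dvd_rat (p : ℕ) (hp : p.Prime)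
    (G : Type*) [Group G] [Finite G] (hG : IsPGroup p G)
    (V : Type*) [AddCommGroup V] [Module ℚ V] [FiniteDimensional ℚ V]
    (ρ : Representation ℚ G V) (hirr : ρ.IsIrreducibleRep) :
    ∃ j : ℕ, Module.finrank ℚ V ∣ (p - 1) * p ^ j := by
  have := Fact.mk hp
  obtain ⟨n, hn⟩ := hG.exists_card_eq
  exact ⟨n, hn ▸ finrank_irreducible_rep_isPGroup_dvd_rat_general hp hG ρ hirr⟩
end
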